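/- arXiv:math/9705223 — 2 statements merged into one kernel-verified Lean document; each statement's English description precedes it below -/
import Mathlib

section
/- Let n \ge 2 and a \ge 1 be integers. There exists an integer N (depending on n and a) such that for every odd integer q > N the following holds. If a is even, writing g(y) := y^{2n+1} \cdot (1 + y^2 + ... + y^{2a-2})^{n-1} \cdot (1 + y^2 + ... + y^{a-2})^2 = \sum_k g_k y^k, then a^{n+1} \cdot N_C(n,q,0,a) = 4 \sum_k g_k (q-k)^n. If a is odd, writing g(y) := y^{2n} \cdot (1 + y^2 + ... + y^{2a-2})^{n-1} \cdot (1 + y + ... + y^{a-1})^2 = \sum_k g_k y^k, then a^{n+1} \cdot N_C(n,q,0,a) = \sum_k g_k (q-k)^n. -/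
open Polynomial

/-- `x` avoids the integer interval `[u, v]` in `ZMod q`. -/
def Avoids {q : ℕ} (x : ZMod q) (u v : ℤ) : Prop :=
  ∀ k : ℤ, u ≤ k → k ≤ v → x ≠ (k : ZMod q)

/-- Count for the type `B` deformation: `x_i`, `x_i - x_j` and `x_i + x_j`
all avoid `[u, v]`. -/
noncomputable def N_B (n q : ℕ) (u v : ℤ) : ℕ :=
  Set.ncard {x : Fin n → ZMod q |
    (∀ i, Avoids (x i) u v) ∧
    ∀ i j : Fin n, i < j → Avoids (x i - x j) u v ∧ Avoids (x i + x j) u v}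

/-- Count for the type `C` deformation: `2x_i`, `x_i - x_j` and `x_i + x_j`
all avoid `[u, v]`. -/
noncomputable def N_C (n q : ℕ) (u v : ℤ) : ℕ :=
  Set.ncard {x : Fin n → ZMod q |
    (∀ i, Avoids (2 * x i) u v) ∧
    ∀ i j : Fin n, i < j → Avoids (x i - x j) u v ∧ Avoids (x i + x j) u v}

/-- Count for the type `BC` deformation: `x_i`, `2x_i`, `x_i - x_j` and `x_i + x_j`
all avoid `[u, v]`. -/
noncomputable def N_BC (n q : ℕ) (u v : ℤ) : ℕ :=
  Set.ncard {x : Fin n → ZMod q |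
    (∀ i, Avoids (x i) u v ∧ Avoids (2 * x i) u v) ∧
    ∀ i j : Fin n, i < j → Avoids (x i - x j) u v ∧ Avoids (x i + x j) u v}

/-- Count for the type `D` deformation: `x_i - x_j` and `x_i + x_j`
avoid `[u, v]`. -/
noncomputable def N_D (n q : ℕ) (u v : ℤ) : ℕ :=
  Set.ncard {x : Fin n → ZMod q |
    ∀ i j : Fin n, i < j → Avoids (x i - x j) u v ∧ Avoids (x i + x j) u v}

/-- `1 + y + y^2 + ... + y^(m-1)`. -/
noncomputable def phi (m : ℕ) : ℚ[X] := ∑ i ∈ Finset.range m, X ^ i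

/-- `1 + y^2 + y^4 + ... + y^(2(m-1))`. -/
noncomputable def phi2 (m : ℕ) : ℚ[X] := ∑ i ∈ Finset.range m, X ^ (2 * i)

/-- For `g = ∑_k g_k y^k`, the sum `∑_k g_k (q - k)^n`. -/
noncomputable def polysum (g : ℚ[X]) (q n : ℕ) : ℚ :=
  ∑ k ∈ Finset.range (g.natDegree + 1), g.coeff k * ((q : ℚ) - (k : ℚ)) ^ n


/-- labels of signed indices: positive ones first, increasing; then negative ones, decreasing. -/
def lab {n : ℕ} (s : Fin n → Bool) (i : Fin n) : ℤ :=
  if s i then (i : ℤ) else 2 * n - i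

lemma lab_inj {n : ℕ} (s : Fin n → Bool) : Function.Injective (lab s) := by
  intro i j h
  have hi := i.2
  have hj := j.2
  unfold lab at h
  ext
  split_ifs at h <;> omega

lemma lab_lt_of {n : ℕ} (s : Fin n → Bool) {i j : Fin n} (hi : s i = true) (hj : s j = false) :
    lab s i < lab s j := by
  have hi' := i.2
  have hj' := j.2
  simp only [lab, hi, hj]
  simp
  omega

/-- configurations -/
def Conf (n b a Q : ℕ) : Set ((Fin n → Bool) × (Fin n → ℕ)) :=
  {c | (∀ i j, c.2 i % 2 = c.2 j % 2) ∧ (∀ i, b ≤ c.2 i ∧ c.2 i + b ≤ Q) ∧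
    (∀ i, (c.1 i = true → a + b ≤ c.2 i) ∧ (c.1 i = false → c.2 i + a + b ≤ Q)) ∧
    ∀ i j, lab c.1 i < lab c.1 j → c.2 i + 2 * b ≤ c.2 j ∨ c.2 j + 2 * a + 2 * b ≤ c.2 i}

/-- signed permutations -/
abbrev Wd (n : ℕ) := (Fin n → Bool) × Equiv.Perm (Fin n)

/-- interior descent indicator -/
def des {m : ℕ} (w : Wd (m + 1)) (t : Fin m) : ℕ :=
  if lab w.1 (w.2 t.succ) < lab w.1 (w.2 t.castSucc) then 1 else 0

/-- initial descent indicator -/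
def des0 {m : ℕ} (w : Wd (m + 1)) : ℕ := if w.1 (w.2 0) then 1 else 0

/-- final descent indicator -/
def desl {m : ℕ} (w : Wd (m + 1)) : ℕ := if w.1 (w.2 (Fin.last m)) then 0 else 1

/-- sorted gap conditions -/
def Gap {m : ℕ} (b a Q : ℕ) (w : Wd (m + 1)) : Set (Fin (m + 1) → ℕ) :=
  {p | (∀ i j, p i % 2 = p j % 2) ∧ b + a * des0 w ≤ p 0 ∧
    (∀ t : Fin m, p t.castSucc + 2 * b + 2 * a * des w t ≤ p t.succ) ∧
    p (Fin.last m) + b + a * desl w ≤ Q}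

/-- the sorting condition -/
def Srt {n : ℕ} (w : Wd n) (p : Fin n → ℕ) : Prop :=
  ∀ t u, t < u → p t < p u ∨ (p t = p u ∧ lab w.1 (w.2 t) < lab w.1 (w.2 u))

lemma gap_chain {m b a Q : ℕ} {w : Wd (m + 1)} {p : Fin (m + 1) → ℕ} (hp : p ∈ Gap b a Q w)
    (t u : Fin (m + 1)) (htu : t < u) :
    (lab w.1 (w.2 t) < lab w.1 (w.2 u) ∧ p t + 2 * b ≤ p u) ∨ p t + 2 * a + 2 * b ≤ p u := by
  obtain ⟨-, -, h, -⟩ := hp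
  have key : ∀ v : Fin m, (lab w.1 (w.2 v.castSucc) < lab w.1 (w.2 v.succ) ∧
      p v.castSucc + 2 * b ≤ p v.succ) ∨ p v.castSucc + 2 * a + 2 * b ≤ p v.succ := by
    intro v
    have hv := h v
    unfold des at hv
    split_ifs at hv with h1
    · right; omega
    · left
      refine ⟨lt_of_le_of_ne (not_lt.1 h1) ?_, by omega⟩
      intro h2
      have := w.2.injective (lab_inj _ h2)
      exact absurd this (Fin.castSucc_lt_succ (i := v)).ne
  induction u using Fin.induction with
  | zero => exact absurd htu (Fin.not_lt_zero t)
  | succ v ih =>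
    have hk := key v
    rcases (Fin.le_castSucc_iff.2 htu).lt_or_eq with h1 | h1
    · have h2 := ih h1
      rcases h2 with h2 | h2 <;> rcases hk with hk | hk
      · left; exact ⟨h2.1.trans hk.1, by omega⟩
      · right; omega
      · right; omega
      · right; omega
    · rw [h1]; exact hk

lemma conf_iff {m b a Q : ℕ} (ha : 1 ≤ a) (w : Wd (m + 1)) (p : Fin (m + 1) → ℕ) :
    p ∈ Gap b a Q w ↔ (w.1, p ∘ w.2.symm) ∈ Conf (m + 1) b a Q ∧ Srt w p := by
  constructor
  · intro hp
    have hc := gap_chain hp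
    have hmono : ∀ t u, t ≤ u → p t ≤ p u := by
      intro t u h
      rcases h.lt_or_eq with h | h
      · rcases hc t u h with h | h <;> omega
      · rw [h]
    obtain ⟨h1, h2, h3, h4⟩ := hp
    refine ⟨⟨fun i j => h1 _ _, ?_, ?_, ?_⟩, ?_⟩
    · intro i
      have := hmono 0 (w.2.symm i) (Fin.zero_le _)
      have := hmono (w.2.symm i) (Fin.last m) (Fin.le_last _)
      simp only [Function.comp]
      omega
    · intro i
      obtain ⟨t, rfl⟩ := w.2.surjective i
      simp only [Function.comp, Equiv.symm_apply_apply]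
      constructor
      · intro hs
        by_cases h0 : w.1 (w.2 0) = true
        · have := hmono 0 t (Fin.zero_le _)
          simp [des0, h0] at h2
          omega
        · have h0 : w.1 (w.2 0) = false := by simpa using h0
          have hl := lab_lt_of w.1 hs h0
          have : (0 : Fin (m+1)) < t := by
            rw [Fin.pos_iff_ne_zero]; rintro rfl; simp [hs] at h0
          rcases hc 0 t this with h | h
          · exact absurd h.1 (not_lt.2 hl.le)
          · omega
      · intro hs
        by_cases h0 : w.1 (w.2 (Fin.last m)) = true
        · have hl := lab_lt_of w.1 h0 hs
          have : t < Fin.last m := by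
            rw [Fin.lt_last_iff_ne_last]; rintro rfl; simp [hs] at h0
          rcases hc t _ this with h | h
          · exact absurd h.1 (not_lt.2 hl.le)
          · omega
        · have := hmono t _ (Fin.le_last _)
          simp [desl, h0] at h4
          omega
    · intro i j hij
      obtain ⟨t, rfl⟩ := w.2.surjective i
      obtain ⟨u, rfl⟩ := w.2.surjective j
      simp only [Function.comp, Equiv.symm_apply_apply]
      rcases lt_trichotomy t u with h | h | h
      · rcases hc t u h with h | h <;> omega
      · subst h; exact absurd hij (lt_irrefl _)
      · rcases hc u t h with h | h
        · exact absurd h.1 (not_lt.2 hij.le)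
        · omega
    · intro t u htu
      rcases hc t u htu with h | h <;> omega
  · rintro ⟨⟨h1, h2, h3, h4⟩, hs⟩
    have e : ∀ t, (p ∘ w.2.symm) (w.2 t) = p t := fun t => by simp
    refine ⟨fun i j => ?_, ?_, ?_, ?_⟩
    · have := h1 (w.2 i) (w.2 j)
      simpa using this
    · have := h3 (w.2 0)
      have := h2 (w.2 0)
      simp only [e] at *
      unfold des0
      split_ifs with h
      · have := (h3 (w.2 0)).1 h
        simp at this ⊢; omega
      · omega
    · intro t
      have hst := hs _ _ (Fin.castSucc_lt_succ (i := t))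
      unfold des
      split_ifs with h
      · have := h4 _ _ h
        simp only [e] at this
        omega
      · have hne : lab w.1 (w.2 t.castSucc) ≠ lab w.1 (w.2 t.succ) := by
          intro h2
          have := w.2.injective (lab_inj _ h2)
          exact absurd this (Fin.castSucc_lt_succ (i := t)).ne
        have := h4 _ _ (lt_of_le_of_ne (not_lt.1 h) hne)
        simp only [e] at this
        omega
    · have := h2 (w.2 (Fin.last m))
      simp only [e] at *
      unfold desl
      split_ifs with h
      · omega
      · have := (h3 (w.2 (Fin.last m))).2 (by simpa using h)
        simp at this ⊢; omega

lemma exists_srt {n : ℕ} (s : Fin n → Bool) (P : Fin n → ℕ) :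
    ∃ σ : Equiv.Perm (Fin n), Srt (s, σ) (P ∘ σ) := by
  let f : Fin n → ℕ ×ₗ ℤ := fun i => toLex (P i, lab s i)
  refine ⟨Tuple.sort f, fun t u htu => ?_⟩
  have h := Tuple.monotone_sort f htu.le
  simp only [f, Function.comp, Prod.Lex.toLex_le_toLex] at h
  simp only [Function.comp]
  rcases h with h | h
  · left; exact h
  · right
    refine ⟨h.1, lt_of_le_of_ne h.2 fun h2 => ?_⟩
    exact htu.ne ((Tuple.sort f).injective (lab_inj _ h2))

lemma srt_unique {n : ℕ} (s : Fin n → Bool) (P : Fin n → ℕ) (σ τ : Equiv.Perm (Fin n))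
    (hσ : Srt (s, σ) (P ∘ σ)) (hτ : Srt (s, τ) (P ∘ τ)) : σ = τ := by
  let f : Fin n → ℕ ×ₗ ℤ := fun i => toLex (P i, lab s i)
  have aux : ∀ ρ : Equiv.Perm (Fin n), Srt (s, ρ) (P ∘ ρ) → Monotone (f ∘ ρ) := by
    intro ρ h t u htu
    rcases htu.lt_or_eq with h1 | h1
    · have := h t u h1
      simp only [f, Function.comp, Prod.Lex.toLex_le_toLex]
      simp only [Function.comp] at this
      rcases this with h | h
      · exact Or.inl h
      · exact Or.inr ⟨h.1, h.2.le⟩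
    · rw [h1]
  have h := Tuple.unique_monotone (aux σ hσ) (aux τ hτ)
  ext1 i
  have hi := congrFun h i
  simp only [f, Function.comp] at hi
  have := congrArg (fun x => (ofLex x).2) hi
  exact lab_inj s this

lemma gap_finite {m b a Q : ℕ} (ha : 1 ≤ a) (w : Wd (m + 1)) : (Gap b a Q w).Finite := by
  refine Set.Finite.subset (Set.Finite.pi' (fun _ : Fin (m+1) => Set.finite_Iic Q)) ?_
  intro p hp i
  have h := ((conf_iff ha w p).1 hp).1.2.1 (w.2 i)
  simp at h ⊢
  omega

lemma conf_card {m b a Q : ℕ} (ha : 1 ≤ a) :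
    (Conf (m + 1) b a Q).ncard = ∑ w : Wd (m + 1), (Gap b a Q w).ncard := by
  have hf := fun w : Wd (m + 1) => (gap_finite (b := b) (Q := Q) ha w).to_subtype
  have : ∀ w : Wd (m + 1), (Gap b a Q w).ncard = Nat.card (Gap b a Q w) := fun w => rfl
  simp only [this]
  rw [← Nat.card_sigma]
  change Nat.card (Conf (m + 1) b a Q) = _
  symm
  refine Nat.card_eq_of_bijective (fun x => (⟨(x.1.1, x.2.1 ∘ x.1.2.symm),
    ((conf_iff ha x.1 x.2.1).1 x.2.2).1⟩ : Conf (m + 1) b a Q)) ⟨?_, ?_⟩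
  · rintro ⟨⟨s, σ⟩, p, hp⟩ ⟨⟨s', τ⟩, p', hp'⟩ h
    simp only [Subtype.mk.injEq, Prod.mk.injEq] at h
    obtain ⟨rfl, h⟩ := h
    have h1 := ((conf_iff ha _ p).1 hp).2
    have h2 := ((conf_iff ha _ p').1 hp').2
    have e1 : p = (p ∘ σ.symm) ∘ σ := by ext; simp
    have e2 : p' = (p ∘ σ.symm) ∘ τ := by rw [h]; ext; simp
    rw [e1] at h1
    rw [e2] at h2
    have : σ = τ := srt_unique s _ σ τ h1 h2
    subst this
    have : p = p' := by rw [e1, e2]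
    subst this
    rfl
  · rintro ⟨⟨s, P⟩, hP⟩
    obtain ⟨σ, hσ⟩ := exists_srt s P
    have e : (P ∘ σ) ∘ σ.symm = P := by ext; simp
    refine ⟨⟨(s, σ), P ∘ σ, (conf_iff ha _ _).2 ⟨?_, hσ⟩⟩, ?_⟩
    · rw [e]; exact hP
    · simp [e]

/-- reduced sorted sequences -/
def Mono (m L : ℕ) : Set (Fin (m + 1) → ℕ) :=
  {R | Monotone R ∧ (∀ i j, R i % 2 = R j % 2) ∧ R (Fin.last m) ≤ L}

/-- monotone sequences with given parity and bound -/
def Dset (k L : ℕ) : Set (Fin k → ℕ) :=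
  {R | Monotone R ∧ (∀ i, R i % 2 = L % 2) ∧ ∀ i, R i ≤ L}

/-- the statistic -/
noncomputable def stat {m : ℕ} (w : Wd (m + 1)) : ℕ :=
  des0 w + 2 * Fin.partialSum (des w) (Fin.last m) + desl w

/-- minimal sequence -/
noncomputable def off {m : ℕ} (b a : ℕ) (w : Wd (m + 1)) (t : Fin (m + 1)) : ℕ :=
  b + a * des0 w + 2 * (b * t) + 2 * (a * Fin.partialSum (des w) t)

lemma off_zero {m : ℕ} (b a : ℕ) (w : Wd (m + 1)) : off b a w 0 = b + a * des0 w := by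
  simp [off]

lemma off_succ {m : ℕ} (b a : ℕ) (w : Wd (m + 1)) (t : Fin m) :
    off b a w t.succ = off b a w t.castSucc + 2 * b + 2 * a * des w t := by
  simp only [off, Fin.partialSum_succ, Fin.val_succ, Fin.val_castSucc]
  ring

lemma off_last {m : ℕ} (b a : ℕ) (w : Wd (m + 1)) :
    off b a w (Fin.last m) + b + a * desl w = 2 * b * (m + 1) + a * stat w := by
  simp only [off, stat, Fin.val_last]
  ring

lemma off_parity {m : ℕ} (b a : ℕ) (w : Wd (m + 1)) (t u : Fin (m + 1)) :
    off b a w t % 2 = off b a w u % 2 := by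
  simp only [off]; omega

lemma gap_eq_image {m b a Q : ℕ} (w : Wd (m + 1)) (hQ : 2 * b * (m + 1) + a * stat w ≤ Q) :
    Gap b a Q w = Set.image (fun R t => off b a w t + R t)
      (Mono m (Q - (2 * b * (m + 1) + a * stat w))) := by
  have hl := off_last b a w
  ext p
  constructor
  · rintro ⟨h1, h2, h3, h4⟩
    have hle : ∀ t, off b a w t ≤ p t := by
      intro t
      induction t using Fin.induction with
      | zero => rw [off_zero]; exact h2
      | succ t ih => rw [off_succ]; have := h3 t; omega
    refine ⟨fun t => p t - off b a w t, ⟨?_, ?_, ?_⟩, ?_⟩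
    · rw [Fin.monotone_iff_le_succ]
      intro t
      have := h3 t
      have := hle t.castSucc
      have := hle t.succ
      simp only [off_succ]
      omega
    · intro i j
      have := hle i
      have := hle j
      have := h1 i j
      have := off_parity b a w i j
      simp only
      omega
    · have := hle (Fin.last m)
      simp only
      omega
    · ext t
      have := hle t
      simp only
      omega
  · rintro ⟨R, ⟨h1, h2, h3⟩, rfl⟩
    refine ⟨?_, ?_, ?_, ?_⟩
    · intro i j
      have := h2 i j
      have := off_parity b a w i j
      simp only
      omega
    · simp [off_zero]
    · intro t
      have := h1 (Fin.castSucc_lt_succ (i := t)).le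
      simp only [off_succ]
      omega
    · simp only
      omega

lemma gap_card {m b a Q : ℕ} (w : Wd (m + 1)) :
    (Gap b a Q w).ncard = if 2 * b * (m + 1) + a * stat w ≤ Q then
      (Mono m (Q - (2 * b * (m + 1) + a * stat w))).ncard else 0 := by
  split_ifs with h
  · rw [gap_eq_image w h, Set.ncard_image_of_injective]
    intro R R' hR
    ext t
    have := congrFun hR t
    simpa using this
  · have : Gap b a Q w = ∅ := by
      rw [Set.eq_empty_iff_forall_notMem]
      rintro p ⟨h1, h2, h3, h4⟩
      have hle : ∀ t, off b a w t ≤ p t := by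
        intro t
        induction t using Fin.induction with
        | zero => rw [off_zero]; exact h2
        | succ t ih => rw [off_succ]; have := h3 t; omega
      have hl := off_last b a w
      have := hle (Fin.last m)
      omega
    simp [this]

lemma top_slice (k L : ℕ) :
    {R : Fin (k + 1) → ℕ | Monotone R ∧ (∀ i j, R i % 2 = R j % 2) ∧ R (Fin.last k) = L} =
      Set.image (fun R => (Fin.snoc R L : Fin (k + 1) → ℕ)) (Dset k L) := by
  ext R
  constructor
  · rintro ⟨h1, h2, h3⟩
    refine ⟨Fin.init R, ⟨?_, ?_, ?_⟩, ?_⟩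
    · intro i j hij
      exact h1 (Fin.castSucc_le_castSucc_iff.2 hij)
    · intro i
      rw [← h3]; exact h2 _ _
    · intro i
      rw [← h3]; exact h1 (Fin.le_last _)
    · simp only
      rw [← h3, Fin.snoc_init_self]
  · rintro ⟨R, ⟨h1, h2, h3⟩, rfl⟩
    have hp : ∀ i, (Fin.snoc R L : Fin (k + 1) → ℕ) i % 2 = L % 2 := by
      intro i
      induction i using Fin.lastCases with
      | last => simp
      | cast i => simpa using h2 i
    refine ⟨?_, ?_, ?_⟩
    · intro i j
      induction i using Fin.lastCases with
      | last =>
        intro h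
        have : j = Fin.last k := le_antisymm (Fin.le_last _) h
        rw [this]
      | cast i =>
        induction j using Fin.lastCases with
        | last => intro _; simpa using h3 i
        | cast j =>
          intro h
          simpa using h1 (Fin.castSucc_le_castSucc_iff.1 h)
    · intro i j
      simp only [hp]
    · simp

lemma top_slice_card (k L : ℕ) :
    {R : Fin (k + 1) → ℕ | Monotone R ∧ (∀ i j, R i % 2 = R j % 2) ∧
      R (Fin.last k) = L}.ncard = (Dset k L).ncard := by
  rw [top_slice, Set.ncard_image_of_injective]
  intro R R' h
  exact (Fin.snoc_injective2 h).1

lemma mono_finite (m L : ℕ) : (Mono m L).Finite := by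
  refine Set.Finite.subset (Set.Finite.pi' (fun _ : Fin (m+1) => Set.finite_Iic L)) ?_
  intro p hp i
  exact (hp.1 (Fin.le_last _)).trans hp.2.2

lemma dset_finite (m L : ℕ) : (Dset m L).Finite := by
  refine Set.Finite.subset (Set.Finite.pi' (fun _ : Fin m => Set.finite_Iic L)) ?_
  intro p hp i
  exact hp.2.2 i

lemma top_slice_finite (k L : ℕ) :
    {R : Fin (k + 1) → ℕ | Monotone R ∧ (∀ i j, R i % 2 = R j % 2) ∧
      R (Fin.last k) = L}.Finite :=
  (mono_finite k L).subset fun _ ⟨h1, h2, h3⟩ => ⟨h1, h2, h3.le⟩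

lemma mono_card_zero (m : ℕ) : (Mono m 0).ncard = (Dset m 0).ncard := by
  rw [← top_slice_card]
  refine congrArg Set.ncard ?_
  ext R
  simp [Mono]

lemma mono_card_succ (m L : ℕ) :
    (Mono m (L + 1)).ncard = (Mono m L).ncard + (Dset m (L + 1)).ncard := by
  rw [← top_slice_card, ← Set.ncard_union_eq _ (mono_finite _ _) (top_slice_finite _ _)]
  · refine congrArg Set.ncard ?_
    ext R
    simp only [Mono, Set.mem_union, Set.mem_ofPred_eq]
    constructor
    · rintro ⟨h1, h2, h3⟩
      rcases Nat.le_succ_iff.1 h3 with h | h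
      · exact Or.inl ⟨h1, h2, h⟩
      · exact Or.inr ⟨h1, h2, h⟩
    · rintro (⟨h1, h2, h3⟩ | ⟨h1, h2, h3⟩)
      · exact ⟨h1, h2, by omega⟩
      · exact ⟨h1, h2, by omega⟩
  · rw [Set.disjoint_left]
    rintro R ⟨-, -, h⟩ ⟨-, -, h'⟩
    omega

lemma dset_card_zero (L : ℕ) : (Dset 0 L).ncard = 1 := by
  rw [Set.ncard_eq_one]
  refine ⟨fun i => i.elim0, ?_⟩
  ext R
  simp only [Dset, Set.mem_ofPred_eq, Set.mem_singleton_iff]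
  constructor
  · intro _; ext i; exact i.elim0
  · intro _; exact ⟨fun i => i.elim0, fun i => i.elim0, fun i => i.elim0⟩

lemma dset_card_small (k L : ℕ) (hL : L < 2) :
    (Dset (k + 1) L).ncard = (Dset k L).ncard := by
  rw [← top_slice_card k]
  refine congrArg Set.ncard ?_
  ext R
  simp only [Dset, Set.mem_ofPred_eq]
  constructor
  · rintro ⟨h1, h2, h3⟩
    refine ⟨h1, fun i j => by rw [h2, h2], ?_⟩
    have := h2 (Fin.last k)
    have := h3 (Fin.last k)
    omega
  · rintro ⟨h1, h2, h3⟩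
    refine ⟨h1, fun i => by rw [h2 _ (Fin.last k), h3], fun i => ?_⟩
    rw [← h3]; exact h1 (Fin.le_last _)

lemma dset_card_succ (k L : ℕ) :
    (Dset (k + 1) (L + 2)).ncard = (Dset (k + 1) L).ncard + (Dset k (L + 2)).ncard := by
  rw [← top_slice_card k, ← Set.ncard_union_eq _ (dset_finite _ _) (top_slice_finite _ _)]
  · refine congrArg Set.ncard ?_
    ext R
    simp only [Dset, Set.mem_union, Set.mem_ofPred_eq]
    constructor
    · rintro ⟨h1, h2, h3⟩
      by_cases h : R (Fin.last k) = L + 2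
      · exact Or.inr ⟨h1, fun i j => by rw [h2, h2], h⟩
      · left
        refine ⟨h1, fun i => by rw [h2]; omega, fun i => ?_⟩
        have := h2 (Fin.last k)
        have := h3 (Fin.last k)
        have := h1 (Fin.le_last i)
        omega
    · rintro (⟨h1, h2, h3⟩ | ⟨h1, h2, h3⟩)
      · exact ⟨h1, fun i => by rw [h2]; omega, fun i => (h3 i).trans (by omega)⟩
      · refine ⟨h1, fun i => by rw [h2 _ (Fin.last k), h3], fun i => ?_⟩
        rw [← h3]; exact h1 (Fin.le_last _)
  · rw [Set.disjoint_left]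
    rintro R ⟨-, -, h⟩ ⟨-, -, h'⟩
    have := h (Fin.last k)
    omega

lemma dset_gf (k : ℕ) :
    (1 - PowerSeries.X) * (1 - PowerSeries.X ^ 2) ^ k * PowerSeries.mk (fun L => ((Dset k L).ncard : ℚ)) = 1 := by
  induction k with
  | zero =>
    simp only [dset_card_zero, pow_zero, mul_one]
    ext L
    rcases L with _ | L
    · simp [sub_mul]
    · simp [sub_mul, PowerSeries.coeff_succ_X_mul, PowerSeries.coeff_one]
  | succ k ih =>
    have : (1 - PowerSeries.X ^ 2) * PowerSeries.mk (fun L => ((Dset (k + 1) L).ncard : ℚ)) =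
        PowerSeries.mk (fun L => ((Dset k L).ncard : ℚ)) := by
      ext L
      rw [sub_mul, one_mul, map_sub, PowerSeries.coeff_X_pow_mul']
      simp only [PowerSeries.coeff_mk]
      split_ifs with h
      · obtain ⟨L, rfl⟩ := Nat.exists_eq_add_of_le' h
        rw [dset_card_succ]
        simp
      · rw [dset_card_small _ _ (not_le.1 h)]
        simp
    rw [pow_succ, ← mul_assoc, mul_assoc, this, ih]

lemma mono_gf (m : ℕ) :
    (1 - PowerSeries.X) ^ 2 * (1 - PowerSeries.X ^ 2) ^ m * PowerSeries.mk (fun L => ((Mono m L).ncard : ℚ)) = 1 := by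
  have : (1 - PowerSeries.X) * PowerSeries.mk (fun L => ((Mono m L).ncard : ℚ)) =
      PowerSeries.mk (fun L => ((Dset m L).ncard : ℚ)) := by
    ext L
    rcases L with _ | L
    · simp [sub_mul, mono_card_zero]
    · simp [sub_mul, PowerSeries.coeff_succ_X_mul, mono_card_succ]
  have h := dset_gf m
  rw [← this] at h
  linear_combination h

lemma conf_gf {m b a : ℕ} (ha : 1 ≤ a) :
    PowerSeries.mk (fun Q => ((Conf (m + 1) b a Q).ncard : ℚ)) =
      PowerSeries.X ^ (2 * b * (m + 1)) * (∑ w : Wd (m + 1), PowerSeries.X ^ (a * stat w)) *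
        PowerSeries.mk (fun L => ((Mono m L).ncard : ℚ)) := by
  ext Q
  rw [Finset.mul_sum, Finset.sum_mul, map_sum]
  simp only [← pow_add, PowerSeries.coeff_X_pow_mul', PowerSeries.coeff_mk]
  rw [conf_card ha]
  push_cast
  refine Finset.sum_congr rfl fun w _ => ?_
  rw [gap_card]
  push_cast
  rfl

lemma slice_card (n M e : ℕ) (he : e < 2) :
    {c : (Fin n → Bool) × (Fin n → ℕ) | ∀ i, c.2 i % 2 = e ∧ c.2 i ≤ M ∧
      (c.1 i = true → 1 ≤ c.2 i) ∧ (c.1 i = false → c.2 i + 1 ≤ M)}.ncard = M ^ n := by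
  have : {c : (Fin n → Bool) × (Fin n → ℕ) | ∀ i, c.2 i % 2 = e ∧ c.2 i ≤ M ∧
      (c.1 i = true → 1 ≤ c.2 i) ∧ (c.1 i = false → c.2 i + 1 ≤ M)} =
      Set.image (fun r : Fin n → Fin M => ((fun i => decide ((r i : ℕ) % 2 ≠ e)),
        fun i => if (r i : ℕ) % 2 = e then (r i : ℕ) else (r i : ℕ) + 1)) Set.univ := by
    ext ⟨s, P⟩
    simp only [Set.mem_ofPred_eq, Set.image_univ, Set.mem_range, Prod.mk.injEq]
    constructor
    · intro h
      refine ⟨fun i => ⟨if s i then P i - 1 else P i, ?_⟩, ?_, ?_⟩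
      · obtain ⟨h1, h2, h3, h4⟩ := h i
        split_ifs with hs
        · have := h3 hs; omega
        · have := h4 (by simpa using hs); omega
      · ext i
        obtain ⟨h1, h2, h3, h4⟩ := h i
        cases hs : s i
        · simp [h1, hs]
        · have := h3 hs
          simp [hs]; omega
      · ext i
        obtain ⟨h1, h2, h3, h4⟩ := h i
        cases hs : s i
        · simp [h1, hs]
        · have := h3 hs
          simp only [hs, if_true]; split_ifs <;> omega
    · rintro ⟨r, rfl, rfl⟩ i
      have := (r i).2
      by_cases hr : (r i : ℕ) % 2 = e
      · simp [hr]; try omega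
      · simp [hr]; try omega
  rw [this, Set.ncard_image_of_injective, Set.ncard_univ]
  · simp [Nat.card_eq_fintype_card]
  · intro r r' h
    simp only [Prod.mk.injEq] at h
    ext i
    have h1 := congrFun h.1 i
    have h2 := congrFun h.2 i
    simp only [decide_eq_decide] at h1
    split_ifs at h2 <;> omega

lemma conf_eq_union (m b a Q : ℕ) :
    (Conf (m + 1) b a Q).Finite ∧
    (Conf (m + 1) b a Q).ncard = (Conf (m + 1) b a Q ∩ {c | ∀ i, c.2 i % 2 = 0}).ncard +
      (Conf (m + 1) b a Q ∩ {c | ∀ i, c.2 i % 2 = 1}).ncard := by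
  have hfin : (Conf (m + 1) b a Q).Finite := by
    refine Set.Finite.subset (Set.Finite.prod (Set.finite_univ (α := Fin (m + 1) → Bool))
      (Set.Finite.pi' (fun _ : Fin (m+1) => Set.finite_Iic Q))) ?_
    rintro ⟨s, P⟩ ⟨h1, h2, h3, h4⟩
    refine ⟨Set.mem_univ _, fun i => ?_⟩
    have := h2 i
    simp only [Set.mem_Iic]
    simp only at this
    omega
  refine ⟨hfin, ?_⟩
  rw [← Set.ncard_union_eq _ (hfin.inter_of_left _) (hfin.inter_of_left _)]
  · refine congrArg Set.ncard ?_
    rw [← Set.inter_union_distrib_left]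
    symm
    rw [Set.inter_eq_left]
    rintro ⟨s, P⟩ ⟨h1, -⟩
    rcases Nat.mod_two_eq_zero_or_one (P 0) with h | h
    · left; intro i; exact (h1 _ _).trans h
    · right; intro i; exact (h1 _ _).trans h
  · rw [Set.disjoint_left]
    rintro c ⟨-, h⟩ ⟨-, h'⟩
    have h1 := h 0
    have h2 := h' 0
    omega

lemma conf01_card (m M : ℕ) : (Conf (m + 1) 0 1 M).ncard = 2 * M ^ (m + 1) := by
  have key : ∀ e < 2, (Conf (m + 1) 0 1 M ∩ {c | ∀ i, c.2 i % 2 = e}).ncard = M ^ (m + 1) := by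
    intro e he
    rw [← slice_card (m + 1) M e he]
    refine congrArg Set.ncard ?_
    ext ⟨s, P⟩
    constructor
    · rintro ⟨⟨h1, h2, h3, h4⟩, h5⟩ i
      have a1 := h2 i
      have a2 := h3 i
      have a3 := h5 i
      simp only at *
      refine ⟨a3, by omega, fun h => ?_, fun h => ?_⟩
      · have := a2.1 h; omega
      · have := a2.2 h; omega
    · intro h
      refine ⟨⟨fun i j => ?_, fun i => ?_, fun i => ?_, fun i j _ => ?_⟩, fun i => (h i).1⟩
      · rw [(h i).1, (h j).1]
      · have := (h i).2.1
        simp only at *; omega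
      · obtain ⟨-, -, h3, h4⟩ := h i
        simp only at *
        refine ⟨fun h => ?_, fun h => ?_⟩
        · have := h3 h; omega
        · have := h4 h; omega
      · have := (h i).1
        have := (h j).1
        simp only at *; omega
  rw [(conf_eq_union m 0 1 M).2, key 0 (by norm_num), key 1 (by norm_num)]
  ring

/-- signed integer -/
def sz {n : ℕ} (c : (Fin n → Bool) × (Fin n → ℕ)) (i : Fin n) : ℤ :=
  if c.1 i then (c.2 i : ℤ) else -(c.2 i : ℤ)

lemma avoids_cast (q : ℕ) (z : ℤ) (a : ℕ) :
    Avoids ((z : ℤ) : ZMod q) 0 (a : ℤ) ↔ ∀ k : ℤ, 0 ≤ k → k ≤ a → ¬ (q : ℤ) ∣ z - k := by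
  unfold Avoids
  refine forall_congr' fun k => imp_congr_right fun _ => imp_congr_right fun _ => not_congr ?_
  rw [ZMod.intCast_eq_intCast_iff_dvd_sub, ← dvd_neg, neg_sub]

lemma avoids_half (q : ℕ) (z : ℤ) (a : ℕ) (h x : ZMod q) (hh : 2 * h = 1) (hx : x = h * z) :
    Avoids x 0 (a : ℤ) ↔ ∀ k : ℤ, 0 ≤ k → k ≤ a → ¬ (q : ℤ) ∣ z - 2 * k := by
  unfold Avoids
  refine forall_congr' fun k => imp_congr_right fun _ => imp_congr_right fun _ => not_congr ?_
  have : (q : ℤ) ∣ z - 2 * k ↔ ((z : ℤ) : ZMod q) = ((2 * k : ℤ) : ZMod q) := by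
    rw [ZMod.intCast_eq_intCast_iff_dvd_sub, ← dvd_neg, neg_sub]
  rw [this, hx]
  push_cast
  constructor
  · intro e
    calc (z : ZMod q) = (2 * h) * z := by rw [hh, one_mul]
      _ = 2 * (h * z) := by ring
      _ = _ := by rw [e]
  · intro e
    rw [e]
    calc h * (2 * (k : ZMod q)) = (2 * h) * k := by ring
      _ = k := by rw [hh, one_mul]

lemma dvd_small (q : ℕ) (y : ℤ) (h : (q : ℤ) ∣ y) (h1 : -(3 * q : ℤ) < y) (h2 : y < 3 * q) :
    y = -2 * q ∨ y = - q ∨ y = 0 ∨ y = q ∨ y = 2 * q := by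
  obtain ⟨t, rfl⟩ := h
  have hq : (0 : ℤ) < q := by omega
  have h3 : -3 < t := by nlinarith
  have h4 : t < 3 := by nlinarith
  have : t = -2 ∨ t = -1 ∨ t = 0 ∨ t = 1 ∨ t = 2 := by omega
  rcases this with rfl | rfl | rfl | rfl | rfl <;> simp [mul_comm]

/-- integer form of the avoidance conditions -/
def IntCond {n : ℕ} (q a : ℕ) (z : Fin n → ℤ) : Prop :=
  (∀ i, ∀ k : ℤ, 0 ≤ k → k ≤ a → ¬ (q : ℤ) ∣ z i - k) ∧
  ∀ i j, i < j → (∀ k : ℤ, 0 ≤ k → k ≤ a → ¬ (q : ℤ) ∣ (z i - z j) - 2 * k) ∧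
    (∀ k : ℤ, 0 ≤ k → k ≤ a → ¬ (q : ℤ) ∣ (z i + z j) - 2 * k)

lemma intCond_iff {n : ℕ} (q a e : ℕ) (hq : Odd q) (hqa : 2 * a + 4 < q)
    (c : (Fin n → Bool) × (Fin n → ℕ)) (he : ∀ i, c.2 i % 2 = e)
    (hb : ∀ i, 1 ≤ c.2 i ∧ c.2 i + 1 ≤ q) :
    IntCond q a (sz c) ↔ c ∈ Conf n 1 a q := by
  obtain ⟨s, P⟩ := c
  simp only at he hb
  obtain ⟨q', hq'⟩ := hq
  constructor
  · rintro ⟨h1, h2⟩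
    refine ⟨fun i j => ?_, fun i => ?_, fun i => ⟨fun hs => ?_, fun hs => ?_⟩, fun i j hij => ?_⟩
    · simp only [he]
    · exact hb i
    · by_contra hlt
      simp only at hs hlt
      refine h1 i (P i) (by omega) (by omega) ?_
      simp [sz, hs]
    · by_contra hlt
      simp only at hs hlt
      have := hb i
      refine h1 i (q - P i) (by omega) (by omega) ?_
      refine Dvd.intro (-1) ?_
      simp [sz, hs]
      ring
    · by_contra hlt
      simp only at hij hlt
      have ei := he i
      have ej := he j
      have hk : (P i : ℤ) - P j = 2 * (((P i : ℤ) - P j) / 2) := by omega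
      have hk0 : 0 ≤ ((P i : ℤ) - P j) / 2 := by omega
      have hk1 : ((P i : ℤ) - P j) / 2 ≤ a := by omega
      generalize ((P i : ℤ) - P j) / 2 = k at hk hk0 hk1
      have hil := i.2
      have hjl := j.2
      cases hi : s i <;> cases hj : s j <;> simp only [lab, hi, hj] at hij
      · have hji : j < i := by rw [Fin.lt_def]; simp at hij; omega
        refine (h2 j i hji).1 k hk0 hk1 ?_
        refine Dvd.intro 0 ?_
        simp only [sz, hi, hj, if_true, if_false, Bool.false_eq_true, mul_zero]
        omega
      · simp at hij; omega
      · rcases lt_trichotomy i j with h | h | h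
        · refine (h2 i j h).2 k hk0 hk1 ?_
          refine Dvd.intro 0 ?_
          simp only [sz, hi, hj, if_true, if_false, Bool.false_eq_true, mul_zero]
          omega
        · subst h; simp [hi] at hj
        · refine (h2 j i h).2 k hk0 hk1 ?_
          refine Dvd.intro 0 ?_
          simp only [sz, hi, hj, if_true, if_false, Bool.false_eq_true, mul_zero]
          omega
      · have hji : i < j := by rw [Fin.lt_def]; simp at hij; omega
        refine (h2 i j hji).1 k hk0 hk1 ?_
        refine Dvd.intro 0 ?_
        simp only [sz, hi, hj, if_true, if_false, Bool.false_eq_true, mul_zero]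
        omega
  · rintro ⟨h1, h2, h3, h4⟩
    simp only at h1 h2 h3 h4
    refine ⟨fun i k hk0 hk1 hd => ?_, fun i j hij => ?_⟩
    · have bi := hb i
      have := h3 i
      cases hi : s i <;> simp only [sz, hi] at hd this
      · have := dvd_small q _ hd (by simp; omega) (by simp; omega)
        simp at *; omega
      · have := dvd_small q _ hd (by simp; omega) (by simp; omega)
        simp at *; omega
    · have bi := hb i
      have bj := hb j
      have ti := h3 i
      have tj := h3 j
      have ei := he i
      have ej := he j
      have l1 := h4 i j
      have l2 := h4 j i
      have hil := i.2
      have hjl := j.2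
      have hij' : (i : ℕ) < j := hij
      constructor <;> intro k hk0 hk1 hd
      all_goals
        cases hi : s i <;> cases hj : s j <;> simp only [sz, lab, hi, hj] at hd ti tj l1 l2 <;>
        simp at hd ti tj l1 l2 <;>
        have := dvd_small q _ hd (by omega) (by omega) <;>
        omega

lemma NC_slice (m q a e : ℕ) (hq : Odd q) (hqa : 2 * a + 4 < q) (he : e < 2) :
    (Conf (m + 1) 1 a q ∩ {c | ∀ i, c.2 i % 2 = e}).ncard = N_C (m + 1) q 0 (a : ℤ) := by
  obtain ⟨q', hq'⟩ := id hq
  have : NeZero q := ⟨by omega⟩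
  set h : ZMod q := ((q' + 1 : ℕ) : ZMod q) with hh
  have h2 : 2 * h = 1 := by
    have : ((q + 1 : ℕ) : ZMod q) = 1 := by simp
    rw [hh, ← this, hq']; push_cast; ring
  have hS : ∀ c : (Fin (m + 1) → Bool) × (Fin (m + 1) → ℕ), (∀ i, c.2 i % 2 = e) →
      (∀ i, 1 ≤ c.2 i ∧ c.2 i + 1 ≤ q) →
      (((∀ i, Avoids (2 * (h * (sz c i : ZMod q))) 0 (a : ℤ)) ∧
        ∀ i j, i < j → Avoids (h * (sz c i : ZMod q) - h * (sz c j : ZMod q)) 0 (a : ℤ) ∧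
        Avoids (h * (sz c i : ZMod q) + h * (sz c j : ZMod q)) 0 (a : ℤ)) ↔
          c ∈ Conf (m + 1) 1 a q) := by
    intro c h1 h3
    rw [← intCond_iff q a e hq hqa c h1 h3]
    unfold IntCond
    refine and_congr (forall_congr' fun i => ?_) (forall_congr' fun i => forall_congr' fun j =>
      imp_congr_right fun _ => and_congr ?_ ?_)
    · rw [← mul_assoc, h2, one_mul, avoids_cast]
    · exact avoids_half q _ a h _ h2 (by push_cast; ring)
    · exact avoids_half q _ a h _ h2 (by push_cast; ring)
  unfold N_C
  refine Set.ncard_congr (fun c _ i => h * (sz c i : ZMod q)) ?_ ?_ ?_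
  · rintro c ⟨hc, hp⟩
    exact (hS c hp (fun i => hc.2.1 i)).2 hc
  · rintro ⟨s, P⟩ ⟨s', P'⟩ ⟨hc, hp⟩ ⟨hc', hp'⟩ heq
    have key : ∀ i, s i = s' i ∧ P i = P' i := by
      intro i
      have e1 := congrFun heq i
      have e2 : ((sz (s, P) i : ℤ) : ZMod q) = ((sz (s', P') i : ℤ) : ZMod q) := by
        calc _ = (2 * h) * ((sz (s, P) i : ℤ) : ZMod q) := by rw [h2, one_mul]
          _ = 2 * (h * ((sz (s, P) i : ℤ) : ZMod q)) := by ring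
          _ = 2 * (h * ((sz (s', P') i : ℤ) : ZMod q)) := by rw [e1]
          _ = (2 * h) * ((sz (s', P') i : ℤ) : ZMod q) := by ring
          _ = _ := by rw [h2, one_mul]
      rw [ZMod.intCast_eq_intCast_iff_dvd_sub] at e2
      have b1 := hc.2.1 i
      have b2 := hc'.2.1 i
      have p1 := hp i
      have p2 := hp' i
      simp only at b1 b2 p1 p2
      cases hi : s i <;> cases hj : s' i <;> simp only [sz, hi, hj] at e2 <;>
        simp at e2 <;> have := dvd_small q _ e2 (by omega) (by omega) <;> simp <;> omega
    refine Prod.ext (funext fun i => (key i).1) (funext fun i => (key i).2)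
  · intro x hx
    let c : (Fin (m + 1) → Bool) × (Fin (m + 1) → ℕ) :=
      (fun i => decide ((2 * x i).val % 2 = e),
       fun i => if (2 * x i).val % 2 = e then (2 * x i).val else q - (2 * x i).val)
    have hv : ∀ i, 1 ≤ (2 * x i).val ∧ (2 * x i).val + 1 ≤ q := by
      intro i
      refine ⟨?_, ZMod.val_lt _⟩
      rw [Nat.one_le_iff_ne_zero]
      intro h0
      rw [ZMod.val_eq_zero] at h0
      refine hx.1 i 0 le_rfl (by omega) (by simpa using h0)
    have hsz : ∀ i, h * (sz c i : ZMod q) = x i := by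
      intro i
      have : (sz c i : ZMod q) = 2 * x i := by
        have hvi := hv i
        by_cases hb : (2 * x i).val % 2 = e
        · simp only [sz, c, hb]
          simp
        · simp only [sz, c, hb]
          simp only [decide_false, if_false, Bool.false_eq_true]
          rw [Nat.cast_sub (by omega)]
          simp
      rw [this, ← mul_assoc, mul_comm h, h2, one_mul]
    have hp : ∀ i, c.2 i % 2 = e := by
      intro i
      have hvi := hv i
      simp only [c]
      split_ifs <;> omega
    have hb : ∀ i, 1 ≤ c.2 i ∧ c.2 i + 1 ≤ q := by
      intro i
      have hvi := hv i
      simp only [c]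
      split_ifs <;> omega
    refine ⟨c, ⟨(hS c hp hb).1 ?_, hp⟩, funext hsz⟩
    simp only [hsz]
    exact hx

lemma NC_card (m q a : ℕ) (hq : Odd q) (hqa : 2 * a + 4 < q) :
    (Conf (m + 1) 1 a q).ncard = 2 * N_C (m + 1) q 0 (a : ℤ) := by
  rw [(conf_eq_union m 1 a q).2, NC_slice m q a 0 hq hqa (by norm_num),
    NC_slice m q a 1 hq hqa (by norm_num)]
  ring

/-- the shift operator on functions `ℤ → ℚ` -/
noncomputable def shft : Module.End ℚ (ℤ → ℚ) := LinearMap.funLeft ℚ ℚ (fun z : ℤ => z - 1)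

lemma shft_pow (k : ℕ) (u : ℤ → ℚ) (z : ℤ) : (shft ^ k) u z = u (z - k) := by
  induction k generalizing z with
  | zero => simp
  | succ k ih =>
    rw [pow_succ', Module.End.mul_apply]
    change (shft ^ k) u (z - 1) = _
    rw [ih]
    congr 1
    push_cast
    ring

lemma aeval_shft (G : ℚ[X]) (u : ℤ → ℚ) (z : ℤ) :
    aeval shft G u z = ∑ k ∈ Finset.range (G.natDegree + 1), G.coeff k * u (z - k) := by
  rw [aeval_eq_sum_range, LinearMap.sum_apply, Finset.sum_apply]
  refine Finset.sum_congr rfl fun k _ => ?_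
  simp [shft_pow]

lemma aeval_monomial_shft (k : ℕ) (c : ℚ) (u : ℤ → ℚ) (z : ℤ) :
    aeval shft (monomial k c) u z = c * u (z - k) := by
  rw [aeval_monomial]
  simp [Module.End.mul_apply, shft_pow, Module.algebraMap_end_apply]

lemma polysum_eq (g : ℚ[X]) (q n : ℕ) :
    polysum g q n = aeval shft g (fun z => (z : ℚ) ^ n) (q : ℤ) := by
  rw [aeval_shft]
  unfold polysum
  refine Finset.sum_congr rfl fun k _ => ?_
  push_cast
  rfl

lemma shft_comm (G : ℚ[X]) (u : ℤ → ℚ) (z : ℤ) :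
    aeval shft G (fun y => (y : ℚ) * u y) z =
      z * aeval shft G u z - aeval shft (X * derivative G) u z := by
  induction G using Polynomial.induction_on' with
  | add p q hp hq =>
    simp only [map_add, LinearMap.add_apply, Pi.add_apply, mul_add, hp, hq]
    ring
  | monomial k c =>
    have : (X * derivative (monomial k c) : ℚ[X]) = monomial k (c * k) := by
      rw [derivative_monomial]
      rcases k with _ | k
      · simp
      · simp [X_mul_monomial]
    rw [this]
    simp only [aeval_monomial_shft]
    push_cast
    ring

lemma shft_kill (f : ℚ[X]) (c : ℤ → ℚ) (hc : aeval shft f c = 0) (n : ℕ) :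
    aeval shft (f ^ (n + 1)) (fun z => (z : ℚ) ^ n * c z) = 0 := by
  induction n with
  | zero => simpa using hc
  | succ n ih =>
    ext z
    have e : (fun z : ℤ => (z : ℚ) ^ (n + 1) * c z) =
        fun z : ℤ => (z : ℚ) * ((fun z : ℤ => (z : ℚ) ^ n * c z) z) := by
      ext z; ring
    rw [e, shft_comm]
    have e1 : aeval shft (f ^ (n + 1 + 1)) (fun z : ℤ => (z : ℚ) ^ n * c z) = 0 := by
      rw [pow_succ', map_mul, Module.End.mul_apply, ih, map_zero]
    have e2 : aeval shft (X * derivative (f ^ (n + 1 + 1)))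
        (fun z : ℤ => (z : ℚ) ^ n * c z) = 0 := by
      have : X * derivative (f ^ (n + 1 + 1)) =
          (X * C ((n + 1 + 1 : ℕ) : ℚ) * derivative f) * f ^ (n + 1) := by
        rw [derivative_pow]
        simp only [Nat.add_sub_cancel]
        ring
      rw [this, map_mul, Module.End.mul_apply, ih, map_zero]
    rw [e1, e2]
    simp

lemma shft_kill' (f h : ℚ[X]) (c : ℤ → ℚ) (hc : aeval shft f c = 0) (n : ℕ) :
    aeval shft (h * f ^ (n + 1)) (fun z => (z : ℚ) ^ n * c z) = 0 := by
  rw [map_mul, Module.End.mul_apply, shft_kill f c hc, map_zero]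

lemma expand_zero (H : ℚ[X]) (u : ℤ → ℚ) (r : ℤ) (hu : ∀ z : ℤ, z % 2 = r → u z = 0)
    (z : ℤ) (hz : z % 2 = r) : aeval shft (expand ℚ 2 H) u z = 0 := by
  induction H using Polynomial.induction_on' with
  | add p q hp hq =>
    simp only [map_add, LinearMap.add_apply, Pi.add_apply, hp, hq, add_zero]
  | monomial k c =>
    rw [expand_monomial, aeval_monomial_shft, hu _ (by push_cast; omega), mul_zero]

lemma sum_dvd (a : ℕ) (ha : 1 ≤ a) (z : ℤ) :
    ∑ i ∈ Finset.range a, (if (a : ℤ) ∣ z - (i : ℕ) then (1 : ℚ) else 0) = 1 := by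
  have h0 := Int.emod_nonneg z (b := (a : ℤ)) (by omega)
  have h1 := Int.emod_lt_of_pos z (b := (a : ℤ)) (by omega)
  rw [Finset.sum_eq_single (z % a).toNat]
  · rw [if_pos]
    rw [Int.toNat_of_nonneg h0]
    exact Int.dvd_self_sub_emod
  · intro i hi hne
    rw [Finset.mem_range] at hi
    rw [if_neg]
    intro hd
    apply hne
    have : z % a = (i : ℤ) % a := (Int.emod_emod_of_dvd _ dvd_rfl).symm.trans (by
      rw [Int.emod_emod_of_dvd _ dvd_rfl]
      exact Int.emod_eq_emod_iff_emod_sub_eq_zero.2 (Int.emod_eq_zero_of_dvd hd))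
    rw [Int.emod_eq_of_lt (a := (i : ℤ)) (by omega) (by omega)] at this
    omega
  · intro h
    rw [Finset.mem_range] at h
    omega

lemma sum_dvd_even (r : ℕ) (hr : 1 ≤ r) (z : ℤ) :
    ∑ i ∈ Finset.range r, (if ((2 * r : ℕ) : ℤ) ∣ z - (2 * i : ℕ) then (1 : ℚ) else 0) =
      if (2 : ℤ) ∣ z then 1 else 0 := by
  split_ifs with h
  · obtain ⟨y, rfl⟩ := h
    refine Eq.trans (Finset.sum_congr rfl fun i _ => ?_) (sum_dvd r hr y)
    have : ((2 * r : ℕ) : ℤ) ∣ 2 * y - (2 * i : ℕ) ↔ (r : ℤ) ∣ y - (i : ℕ) := by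
      push_cast
      rw [← mul_sub]
      exact mul_dvd_mul_iff_left (by norm_num)
    simp only [this]
  · refine Finset.sum_eq_zero fun i _ => ?_
    rw [if_neg]
    intro hd
    have : (2 : ℤ) ∣ z - (2 * i : ℕ) := Dvd.dvd.trans (by push_cast; exact dvd_mul_right _ _) hd
    push_cast at this
    omega

lemma aeval_phi (a : ℕ) (u : ℤ → ℚ) (z : ℤ) :
    aeval shft (phi a) u z = ∑ i ∈ Finset.range a, u (z - (i : ℕ)) := by
  simp [phi, map_sum, LinearMap.sum_apply, Finset.sum_apply, shft_pow]

lemma aeval_phi2 (a : ℕ) (u : ℤ → ℚ) (z : ℤ) :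
    aeval shft (phi2 a) u z = ∑ i ∈ Finset.range a, u (z - (2 * i : ℕ)) := by
  simp only [phi2, map_sum, LinearMap.sum_apply, Finset.sum_apply, map_pow, aeval_X, shft_pow]

lemma phi_mul (a : ℕ) : phi a * (1 - X) = 1 - X ^ a := by
  unfold phi
  have := geom_sum_mul (X : ℚ[X]) a
  linear_combination -this

lemma phi2_mul (a : ℕ) : phi2 a * (1 - X ^ 2) = 1 - X ^ (2 * a) := by
  unfold phi2
  have := geom_sum_mul ((X : ℚ[X]) ^ 2) a
  simp only [← pow_mul] at this
  linear_combination -this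

lemma phi2_expand (a : ℕ) : phi2 a = expand ℚ 2 (phi a) := by
  simp [phi, phi2, map_sum, pow_mul]

lemma conf1_gf (m a : ℕ) (ha : 1 ≤ a) :
    PowerSeries.mk (fun Q => ((Conf (m + 1) 1 a Q).ncard : ℚ)) =
      ((X ^ (2 * (m + 1)) * (phi2 a) ^ m * (phi a) ^ 2 : ℚ[X]) : PowerSeries ℚ) *
        PowerSeries.expand a (by omega) (PowerSeries.mk fun M => 2 * (M : ℚ) ^ (m + 1)) := by
  have h1 := conf_gf (m := m) (b := 0) (a := 1) le_rfl
  have h2 := conf_gf (m := m) (b := 1) (a := a) ha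
  have h3 := mono_gf m
  simp only [conf01_card] at h1
  push_cast at h1
  simp only [mul_zero, zero_mul, pow_zero, one_mul] at h1
  have h4 : (∑ w : Wd (m + 1), PowerSeries.X ^ (stat w) : PowerSeries ℚ) =
      (1 - PowerSeries.X) ^ 2 * (1 - PowerSeries.X ^ 2) ^ m *
        PowerSeries.mk fun M => 2 * (M : ℚ) ^ (m + 1) := by
    rw [h1]
    linear_combination -(∑ w : Wd (m + 1), PowerSeries.X ^ (stat w) : PowerSeries ℚ) * h3
  have h5 := congrArg (PowerSeries.expand a (by omega)) h4
  simp only [map_sum, map_mul, map_pow, map_sub, map_one, PowerSeries.expand_X,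
    ← pow_mul] at h5
  rw [h2, h5]
  have p1 := congrArg (fun p : ℚ[X] => (p : PowerSeries ℚ)) (phi_mul a)
  have p2 := congrArg (fun p : ℚ[X] => (p : PowerSeries ℚ)) (phi2_mul a)
  simp only [Polynomial.coe_mul, Polynomial.coe_sub, Polynomial.coe_one, Polynomial.coe_X,
    Polynomial.coe_pow] at p1 p2 ⊢
  rw [mul_comm a 2, ← p1, ← p2]
  generalize PowerSeries.mk (fun L => ((Mono m L).ncard : ℚ)) = M at *
  rw [mul_pow, mul_pow]
  linear_combination (PowerSeries.X ^ (2 * (m + 1)) * (phi2 a : PowerSeries ℚ) ^ m *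
    (phi a : PowerSeries ℚ) ^ 2 * PowerSeries.expand a (by omega)
      (PowerSeries.mk fun M => 2 * (M : ℚ) ^ (m + 1))) * h3

lemma coeff_mul_shft (G : ℚ[X]) (E : PowerSeries ℚ) (u : ℤ → ℚ) (q : ℕ) (hq : G.natDegree ≤ q)
    (hu : ∀ k : ℕ, PowerSeries.coeff k E = u k) :
    PowerSeries.coeff q ((G : PowerSeries ℚ) * E) = aeval shft G u q := by
  rw [aeval_shft, PowerSeries.coeff_mul,
    Finset.Nat.sum_antidiagonal_eq_sum_range_succ
      (fun i j => PowerSeries.coeff i (G : PowerSeries ℚ) * PowerSeries.coeff j E)]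
  symm
  refine (Finset.sum_subset (Finset.range_subset_range.2 (by omega)) ?_).trans
    (Finset.sum_congr rfl fun k hk => ?_)
  · intro k _ hk
    rw [Finset.mem_range, not_lt] at hk
    rw [Polynomial.coeff_eq_zero_of_natDegree_lt (by omega), zero_mul]
  · rw [Finset.mem_range] at hk
    rw [hu, Polynomial.coeff_coe, Nat.cast_sub (by omega)]

lemma NC_formula (m a q : ℕ) (ha : 1 ≤ a) (hq : Odd q) (hqa : 2 * a + 4 < q)
    (hd : (X ^ (2 * (m + 1)) * (phi2 a) ^ m * (phi a) ^ 2 : ℚ[X]).natDegree ≤ q) :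
    (a : ℚ) ^ (m + 1) * (N_C (m + 1) q 0 (a : ℤ) : ℚ) =
      aeval shft (X ^ (2 * (m + 1)) * (phi2 a) ^ m * (phi a) ^ 2)
        (fun z : ℤ => (z : ℚ) ^ (m + 1) * if (a : ℤ) ∣ z then 1 else 0) q := by
  have h := congrArg (PowerSeries.coeff q) (conf1_gf m a ha)
  rw [PowerSeries.coeff_mk, NC_card m q a hq hqa] at h
  have ha0 : (a : ℚ) ≠ 0 := by positivity
  set G := (X ^ (2 * (m + 1)) * (phi2 a) ^ m * (phi a) ^ 2 : ℚ[X])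
  set u : ℤ → ℚ := (fun z : ℤ => (z : ℚ) ^ (m + 1) * if (a : ℤ) ∣ z then 1 else 0)
  rw [coeff_mul_shft G _ ((2 / (a : ℚ) ^ (m + 1)) • u) q hd] at h
  · rw [map_smul, Pi.smul_apply, smul_eq_mul] at h
    push_cast at h
    field_simp at h
    linarith
  · intro k
    rw [PowerSeries.coeff_expand, Pi.smul_apply, smul_eq_mul]
    simp only [u, Int.natCast_dvd_natCast]
    split_ifs with hk
    · obtain ⟨y, rfl⟩ := hk
      rw [PowerSeries.coeff_mk, Nat.mul_div_cancel_left _ (by omega)]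
      push_cast
      rw [mul_pow]
      field_simp
    · simp

lemma final_odd (m a q : ℕ) (ha : 1 ≤ a) (hq : Odd q) (hqa : 2 * a + 4 < q)
    (hd : (X ^ (2 * (m + 1)) * (phi2 a) ^ m * (phi a) ^ 2 : ℚ[X]).natDegree ≤ q) (ho : Odd a) :
    (a : ℚ) ^ (m + 1 + 1) * (N_C (m + 1) q 0 (a : ℤ) : ℚ) =
      polysum (X ^ (2 * (m + 1)) * (phi2 a) ^ m * (phi a) ^ 2) q (m + 1) := by
  have h := NC_formula m a q ha hq hqa hd
  obtain ⟨f, hf⟩ : ∃ f : ℚ[X], phi2 a = f * phi a := by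
    have hd : (1 + X : ℚ[X]) ∣ 1 + X ^ a := by
      have := ho.add_dvd_pow_add_pow (1 : ℚ[X]) X
      simpa using this
    obtain ⟨f, hf⟩ := hd
    refine ⟨f, ?_⟩
    have h1 := phi_mul a
    have h2 := phi2_mul a
    have hne : (1 - X ^ 2 : ℚ[X]) ≠ 0 := by
      intro h0
      have := congrArg (Polynomial.eval 0) h0
      simp at this
    apply mul_right_cancel₀ hne
    rw [h2]
    have : (1 - X ^ (2 * a) : ℚ[X]) = (1 - X ^ a) * (1 + X ^ a) := by ring
    rw [this, hf, ← h1]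
    ring
  have hk := shft_kill' (phi a) (X ^ (2 * (m + 1)) * f ^ m)
    (fun z : ℤ => (a : ℚ) * (if (a : ℤ) ∣ z then 1 else 0) - 1) (by
      ext z
      rw [aeval_phi, Finset.sum_sub_distrib, ← Finset.mul_sum, sum_dvd a ha]
      simp) (m + 1)
  have e : X ^ (2 * (m + 1)) * f ^ m * phi a ^ (m + 1 + 1) =
      X ^ (2 * (m + 1)) * (phi2 a) ^ m * (phi a) ^ 2 := by
    rw [hf]; ring
  rw [e] at hk
  have hfun : (fun z : ℤ => (z : ℚ) ^ (m + 1) * ((a : ℚ) * (if (a : ℤ) ∣ z then 1 else 0) - 1)) =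
      (a : ℚ) • (fun z : ℤ => (z : ℚ) ^ (m + 1) * if (a : ℤ) ∣ z then 1 else 0) -
        fun z : ℤ => (z : ℚ) ^ (m + 1) := by
    ext z
    simp only [Pi.sub_apply, Pi.smul_apply, smul_eq_mul]
    ring
  rw [hfun, map_sub, map_smul] at hk
  have hk' := congrFun hk (q : ℤ)
  simp only [Pi.sub_apply, Pi.smul_apply, smul_eq_mul, Pi.zero_apply] at hk'
  rw [← h, ← polysum_eq] at hk'
  rw [pow_succ]
  linarith

lemma final_even (m r q : ℕ) (hr : 1 ≤ r) (hq : Odd q) (hqa : 2 * (2 * r) + 4 < q)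
    (hd : (X ^ (2 * (m + 1)) * (phi2 (2 * r)) ^ m * (phi (2 * r)) ^ 2 : ℚ[X]).natDegree ≤ q) :
    ((2 * r : ℕ) : ℚ) ^ (m + 1 + 1) * (N_C (m + 1) q 0 ((2 * r : ℕ) : ℤ) : ℚ) =
      4 * polysum (X ^ (2 * (m + 1) + 1) * (phi2 (2 * r)) ^ m * (phi2 r) ^ 2) q (m + 1) := by
  have h := NC_formula m (2 * r) q (by omega) hq hqa hd
  have hqz : (q : ℤ) % 2 = 1 := by
    obtain ⟨t, ht⟩ := hq
    omega
  have hne : (1 - X : ℚ[X]) ≠ 0 := by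
    intro h0
    have := congrArg (Polynomial.eval 0) h0
    simp at this
  have hne2 : (1 - X ^ 2 : ℚ[X]) ≠ 0 := by
    intro h0
    have := congrArg (Polynomial.eval 0) h0
    simp at this
  have e1 : phi (2 * r) = (1 + X) * phi2 r := by
    apply mul_right_cancel₀ hne
    rw [phi_mul, ← phi2_mul]
    ring
  have e2 : phi2 (2 * r) = (1 + X ^ (2 * r)) * phi2 r := by
    apply mul_right_cancel₀ hne2
    rw [mul_assoc, phi2_mul, phi2_mul]
    ring
  set u : ℤ → ℚ := (fun z : ℤ => (z : ℚ) ^ (m + 1) * if ((2 * r : ℕ) : ℤ) ∣ z then 1 else 0)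
    with hu
  set g := (X ^ (2 * (m + 1) + 1) * (phi2 (2 * r)) ^ m * (phi2 r) ^ 2 : ℚ[X]) with hg
  have huo : ∀ z : ℤ, z % 2 = 1 → u z = 0 := by
    intro z hz
    simp only [hu]
    rw [if_neg, mul_zero]
    intro hdv
    have : (2 : ℤ) ∣ z := Dvd.dvd.trans (by push_cast; exact dvd_mul_right _ _) hdv
    omega
  -- split the odd part
  have e3 : (X ^ (2 * (m + 1)) * (phi2 (2 * r)) ^ m * (phi (2 * r)) ^ 2 : ℚ[X]) =
      C 2 * g + expand ℚ 2 (X ^ (m + 1) * phi (2 * r) ^ m * phi r ^ 2 * (1 + X)) := by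
    simp only [map_mul, map_pow, map_add, map_one, expand_X, ← phi2_expand]
    rw [hg, e1]
    simp only [C_ofNat]
    ring
  have h1 : aeval shft (X ^ (2 * (m + 1)) * (phi2 (2 * r)) ^ m * (phi (2 * r)) ^ 2) u (q : ℤ) =
      2 * aeval shft g u (q : ℤ) := by
    rw [e3, map_add, LinearMap.add_apply, Pi.add_apply, expand_zero _ u 1 huo _ hqz, add_zero,
      map_mul, aeval_C, Module.End.mul_apply, Module.algebraMap_end_apply]
    simp
  rw [h1] at h
  -- the polynomial side
  set v : ℤ → ℚ := (fun z : ℤ => (z : ℚ) ^ (m + 1) * if (2 : ℤ) ∣ z then 1 else 0) with hv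
  have h2 : polysum g q (m + 1) = aeval shft g v (q : ℤ) := by
    rw [polysum_eq, ← sub_eq_zero, ← Pi.sub_apply, ← map_sub]
    have : g = X * expand ℚ 2 (X ^ (m + 1) * phi (2 * r) ^ m * phi r ^ 2) := by
      simp only [map_mul, map_pow, expand_X, ← phi2_expand]
      rw [hg]
      ring
    rw [this, map_mul, Module.End.mul_apply, aeval_X]
    change aeval shft _ _ ((q : ℤ) - 1) = 0
    refine expand_zero _ _ 0 ?_ _ (by omega)
    intro z hz
    simp only [Pi.sub_apply, hv]
    rw [if_pos (by omega)]
    ring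
  have hk := shft_kill' (phi2 r) (X ^ (2 * (m + 1) + 1) * (1 + X ^ (2 * r)) ^ m)
    (fun z : ℤ => (r : ℚ) * (if ((2 * r : ℕ) : ℤ) ∣ z then 1 else 0) -
      if (2 : ℤ) ∣ z then 1 else 0) (by
      ext z
      rw [aeval_phi2, Finset.sum_sub_distrib, ← Finset.mul_sum, sum_dvd_even r hr]
      have : ∀ i ∈ Finset.range r, (if (2 : ℤ) ∣ z - (2 * i : ℕ) then (1 : ℚ) else 0) =
          if (2 : ℤ) ∣ z then 1 else 0 := by
        intro i _
        have : (2 : ℤ) ∣ z - (2 * i : ℕ) ↔ (2 : ℤ) ∣ z := by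
          push_cast; omega
        simp only [this]
      rw [Finset.sum_congr rfl this]
      simp) (m + 1)
  have e : X ^ (2 * (m + 1) + 1) * (1 + X ^ (2 * r)) ^ m * phi2 r ^ (m + 1 + 1) = g := by
    rw [hg, e2, mul_pow]; ring
  rw [e] at hk
  have hfun : (fun z : ℤ => (z : ℚ) ^ (m + 1) *
      ((r : ℚ) * (if ((2 * r : ℕ) : ℤ) ∣ z then 1 else 0) - if (2 : ℤ) ∣ z then 1 else 0)) =
      (r : ℚ) • u - v := by
    ext z
    simp only [Pi.sub_apply, Pi.smul_apply, smul_eq_mul, hu, hv]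
    ring
  rw [hfun, map_sub, map_smul] at hk
  have hk' := congrFun hk (q : ℤ)
  simp only [Pi.sub_apply, Pi.smul_apply, smul_eq_mul, Pi.zero_apply] at hk'
  rw [h2, pow_succ, mul_right_comm, h]
  push_cast
  linarith

/-- Proposition 4.2. Formula for the number of points avoiding the
`C_n` deformation with hyperplanes `2x_i, x_i ± x_j = 0, 1, ..., a`,
for all large odd `q`. -/
theorem statement6 (n a : ℕ) (hn : 2 ≤ n) (ha : 1 ≤ a) :
    ∃ N : ℕ, ∀ q : ℕ, Odd q → N < q →
      (Even a →
        (a : ℚ) ^ (n + 1) * (N_C n q 0 (a : ℤ) : ℚ) =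
          4 * polysum (X ^ (2 * n + 1) * (phi2 a) ^ (n - 1) * (phi2 (a / 2)) ^ 2) q n) ∧
      (Odd a →
        (a : ℚ) ^ (n + 1) * (N_C n q 0 (a : ℤ) : ℚ) =
          polysum (X ^ (2 * n) * (phi2 a) ^ (n - 1) * (phi a) ^ 2) q n) := by
  obtain ⟨m, rfl⟩ : ∃ m, n = m + 1 := ⟨n - 1, by omega⟩
  refine ⟨2 * a + 4 +
    (X ^ (2 * (m + 1)) * (phi2 a) ^ m * (phi a) ^ 2 : ℚ[X]).natDegree, fun q hq hN => ⟨?_, ?_⟩⟩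
  · intro he
    obtain ⟨r, rfl⟩ := he.two_dvd
    have hdiv : 2 * r / 2 = r := by omega
    rw [hdiv, Nat.add_sub_cancel]
    exact final_even m r q (by omega) hq (by omega) (by omega)
  · intro ho
    rw [Nat.add_sub_cancel]
    exact final_odd m a q ha hq (by omega) (by omega) ho
end

section
/- Let n \ge 2 and a \ge 1 be integers. There exists an integer N (depending on n and a) such that for every odd integer q > N, N_B(n,q,0,a) = N_C(n,q,0,a). In other words, for large odd q, the number of points of (ZMod q)^n avoiding the type B_n deformation (hyperplanes x_i = 0,...,a and x_i \pm x_j = 0,...,a) equals the number of points avoiding the type C_n deformation (hyperplanes 2x_i = 0,...,a and x_i \pm x_j = 0,...,a). -/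
open Polynomial

section BCproof

/-- Two sets related by mutually inverse maps have the same `ncard`. -/
lemma ncard_eq_of_inv {α β : Type*} {s : Set α} {t : Set β} (f : α → β) (g : β → α)
    (hf : ∀ x ∈ s, f x ∈ t) (hg : ∀ y ∈ t, g y ∈ s)
    (hl : ∀ x ∈ s, g (f x) = x) (hr : ∀ y ∈ t, f (g y) = y) : s.ncard = t.ncard := by
  have hb : Set.BijOn f s t := Set.InvOn.bijOn ⟨hl, hr⟩ hf hg
  rw [← hb.image_eq, Set.InjOn.ncard_image hb.injOn]

/-- The pair condition on signed positions. -/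
def PairOK (a u v : ℤ) : Prop :=
  (0 < u → 0 < v → (u < v ∨ v + a < u)) ∧ (u < 0 → v < 0 → (u < v ∨ v + a < u)) ∧
  (0 < u → v < 0 → (u + v < 0 ∨ a < u + v)) ∧ (u < 0 → 0 < v → (u + v < 0 ∨ a < u + v))

/-- Bounded good configurations. -/
def Gd {n : ℕ} (a M : ℤ) (x : Fin n → ℤ) : Prop :=
  (∀ i, x i ≠ 0 ∧ -M ≤ x i ∧ x i ≤ M) ∧ ∀ i j, i < j → PairOK a (x i) (x j)

/-- Letter order. -/
def Lt {n : ℕ} (x : Fin n → ℤ) (i k : Fin n) : Prop :=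
  (0 < x i ∧ x k < 0) ∨ (0 < x i ∧ 0 < x k ∧ i.val < k.val) ∨
    (x i < 0 ∧ x k < 0 ∧ k.val < i.val)

lemma Gd_iff {n : ℕ} (a M : ℤ) (ha : 0 ≤ a) (x : Fin n → ℤ) :
    Gd a M x ↔ (∀ i, x i ≠ 0 ∧ -M ≤ x i ∧ x i ≤ M) ∧
      ∀ i k, i ≠ k → (x i).natAbs ≤ (x k).natAbs → ((x k).natAbs : ℤ) ≤ (x i).natAbs + a →
        Lt x i k := by
  unfold Gd Lt PairOK
  refine and_congr_right fun h0 => ⟨fun h i k hik h1 h2 => ?_, fun h i j hij => ?_⟩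
  · have := h0 i
    have := h0 k
    rcases lt_or_gt_of_ne hik with h' | h'
    · have := h i k h'
      have : i.val < k.val := h'
      omega
    · have := h k i h'
      have : k.val < i.val := h'
      omega
  · have := h0 i
    have := h0 j
    have h1 := h i j hij.ne
    have h2 := h j i hij.ne'
    have : i.val < j.val := hij
    omega

lemma box_finite (n : ℕ) (M : ℤ) : {x : Fin n → ℤ | ∀ i, -M ≤ x i ∧ x i ≤ M}.Finite := by
  exact (Set.finite_Icc (fun _ : Fin n => -M) (fun _ => M)).subset
    fun x hx => ⟨fun i => (hx i).1, fun i => (hx i).2⟩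

lemma Gd_finite {n : ℕ} (a M : ℤ) (P : (Fin n → ℤ) → Prop) :
    {x : Fin n → ℤ | Gd a M x ∧ P x}.Finite :=
  (box_finite n M).subset fun x hx i => (hx.1.1 i).2

/-- number of good configurations with property `P`. -/
noncomputable def cnt (n : ℕ) (a M : ℤ) (P : (Fin n → ℤ) → Prop) : ℕ :=
  Set.ncard {x : Fin n → ℤ | Gd a M x ∧ P x}

/-- number of marked good configurations with property `P`. -/
noncomputable def cnt3 (n : ℕ) (a M : ℤ) (P : Fin n → Fin n → (Fin n → ℤ) → Prop) : ℕ :=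
  Set.ncard {z : (Fin n × Fin n) × (Fin n → ℤ) | Gd a M z.2 ∧ P z.1.1 z.1.2 z.2}

lemma ncard_split {α : Type*} {S : Set α} (hS : S.Finite) (Q : α → Prop) :
    S.ncard = {x | x ∈ S ∧ Q x}.ncard + {x | x ∈ S ∧ ¬ Q x}.ncard := by
  rw [← Set.ncard_inter_add_ncard_sdiff_eq_ncard S {x | Q x} hS]
  rfl

lemma cnt_split (n : ℕ) (a M : ℤ) (P Q : (Fin n → ℤ) → Prop) :
    cnt n a M P = cnt n a M (fun x => P x ∧ Q x) + cnt n a M (fun x => P x ∧ ¬ Q x) := by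
  unfold cnt
  rw [ncard_split (Gd_finite a M P) Q]
  simp only [Set.mem_ofPred_eq, and_assoc]

lemma cnt3_split (n : ℕ) (a M : ℤ) (P Q : Fin n → Fin n → (Fin n → ℤ) → Prop) :
    cnt3 n a M P = cnt3 n a M (fun i j x => P i j x ∧ Q i j x) +
      cnt3 n a M (fun i j x => P i j x ∧ ¬ Q i j x) := by
  unfold cnt3
  rw [ncard_split (S := {z : (Fin n × Fin n) × (Fin n → ℤ) | Gd a M z.2 ∧ P z.1.1 z.1.2 z.2}) ?_
    (fun z => Q z.1.1 z.1.2 z.2)]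
  · simp only [Set.mem_ofPred_eq, and_assoc]
  · refine (Set.Finite.prod (Set.finite_univ (α := Fin n × Fin n)) (box_finite n M)).subset ?_
    intro z hz
    exact ⟨trivial, fun i => (hz.1.1 i).2⟩

lemma cnt_congr {n : ℕ} {a M : ℤ} {P Q : (Fin n → ℤ) → Prop}
    (h : ∀ x, Gd a M x → (P x ↔ Q x)) : cnt n a M P = cnt n a M Q := by
  unfold cnt
  congr 1
  ext x
  exact and_congr_right (h x)

lemma cnt3_congr {n : ℕ} {a M : ℤ} {P Q : Fin n → Fin n → (Fin n → ℤ) → Prop}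
    (h : ∀ i j x, Gd a M x → (P i j x ↔ Q i j x)) : cnt3 n a M P = cnt3 n a M Q := by
  unfold cnt3
  congr 1
  ext x
  exact and_congr_right (h _ _ _)

/-- `i` is last and `j` is second to last. -/
def L2 {n : ℕ} (i j : Fin n) (x : Fin n → ℤ) : Prop :=
  (x j).natAbs < (x i).natAbs ∧ ∀ k, k ≠ i → (x k).natAbs ≤ (x j).natAbs

lemma Gd_abs_ne {n : ℕ} {a M : ℤ} (ha : 0 ≤ a) {x : Fin n → ℤ} (h : Gd a M x) {i j : Fin n}
    (hij : i ≠ j) : (x i).natAbs ≠ (x j).natAbs := by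
  have h' := (Gd_iff a M ha x).1 h
  have h1 := h'.2 i j hij
  have h2 := h'.2 j i hij.symm
  unfold Lt at h1 h2
  omega

lemma L2_exists {n : ℕ} (hn : 2 ≤ n) {a M : ℤ} (ha : 0 ≤ a) {x : Fin n → ℤ} (h : Gd a M x) :
    ∃ i j, L2 i j x := by
  obtain ⟨i, -, hi⟩ := Finset.exists_max_image (Finset.univ : Finset (Fin n))
    (fun k => (x k).natAbs) ⟨⟨0, by omega⟩, Finset.mem_univ _⟩
  have hne : (Finset.univ.erase i : Finset (Fin n)).Nonempty := by
    rw [← Finset.card_pos, Finset.card_erase_of_mem (Finset.mem_univ _)]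
    simp; omega
  obtain ⟨j, hj, hj'⟩ := Finset.exists_max_image (Finset.univ.erase i : Finset (Fin n))
    (fun k => (x k).natAbs) hne
  refine ⟨i, j, ?_, fun k hk => hj' k (by simp [hk])⟩
  have h1 : j ≠ i := by simpa using hj
  have := Gd_abs_ne ha h h1
  have := hi j (Finset.mem_univ _)
  omega

lemma L2_unique {n : ℕ} {x : Fin n → ℤ} {a M : ℤ} (ha : 0 ≤ a) (h : Gd a M x) {i j i' j' : Fin n}
    (h1 : L2 i j x) (h2 : L2 i' j' x) : i = i' ∧ j = j' := by
  obtain ⟨h1, h1'⟩ := h1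
  obtain ⟨h2, h2'⟩ := h2
  have e : i = i' := by
    by_contra hc
    have := h1' i' (Ne.symm hc)
    have := h2' i hc
    omega
  subst e
  refine ⟨rfl, ?_⟩
  by_contra hc
  have h3 : j ≠ i := by rintro rfl; omega
  have h4 : j' ≠ i := by rintro rfl; omega
  have := h1' _ h4
  have := h2' _ h3
  have := Gd_abs_ne ha h hc
  omega

/-- Counting configurations is the same as counting configurations with the last two marked. -/
lemma cnt_eq_cnt3 {n : ℕ} (hn : 2 ≤ n) {a M : ℤ} (ha : 0 ≤ a) (P : (Fin n → ℤ) → Prop) :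
    cnt n a M P = cnt3 n a M (fun i j x => L2 i j x ∧ P x) := by
  classical
  unfold cnt cnt3
  symm
  apply Set.ncard_congr (fun z _ => z.2)
  · rintro ⟨⟨i, j⟩, x⟩ h
    exact ⟨h.1, h.2.2⟩
  · rintro ⟨⟨i, j⟩, x⟩ ⟨⟨i', j'⟩, x'⟩ h h' (rfl : x = x')
    obtain ⟨e1, e2⟩ := L2_unique ha h.1 h.2.1 h'.2.1
    simp_all
  · rintro x ⟨h, hp⟩
    obtain ⟨i, j, hij⟩ := L2_exists hn ha h
    exact ⟨((i, j), x), ⟨h, hij, hp⟩, rfl⟩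

/-- all small letters are at positions larger than `α`. -/
def Apos {n : ℕ} (α : ℤ) (x : Fin n → ℤ) : Prop := ∀ k, 0 < x k → α < x k

/-- the first letter is small (`b = true`) or big. -/
def Fst {n : ℕ} (b : Bool) (x : Fin n → ℤ) : Prop :=
  ∃ i, (0 < x i ↔ b = true) ∧ ∀ k, (x i).natAbs ≤ (x k).natAbs

/-- the last letter is small (`b = true`) or big. -/
def Lst {n : ℕ} (b : Bool) (x : Fin n → ℤ) : Prop :=
  ∃ i, (0 < x i ↔ b = true) ∧ ∀ k, (x k).natAbs ≤ (x i).natAbs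

lemma Fst_not {n : ℕ} (hn : 2 ≤ n) {a M : ℤ} (ha : 0 ≤ a) {x : Fin n → ℤ} (h : Gd a M x) :
    ¬ Fst true x ↔ Fst false x := by
  constructor
  · intro hc
    obtain ⟨i, -, hi⟩ := Finset.exists_min_image (Finset.univ : Finset (Fin n))
      (fun k => (x k).natAbs) ⟨⟨0, by omega⟩, Finset.mem_univ _⟩
    refine ⟨i, ?_, fun k => hi k (Finset.mem_univ _)⟩
    by_contra hc'
    exact hc ⟨i, by simpa using hc', fun k => hi k (Finset.mem_univ _)⟩
  · rintro ⟨i, h1, h2⟩ ⟨j, h3, h4⟩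
    have e : i = j := by
      by_contra hc
      exact Gd_abs_ne ha h hc (le_antisymm (h2 j) (h4 i))
    subst e
    simp at h1 h3
    omega

lemma Lst_not {n : ℕ} (hn : 2 ≤ n) {a M : ℤ} (ha : 0 ≤ a) {x : Fin n → ℤ} (h : Gd a M x) :
    ¬ Lst true x ↔ Lst false x := by
  constructor
  · intro hc
    obtain ⟨i, -, hi⟩ := Finset.exists_max_image (Finset.univ : Finset (Fin n))
      (fun k => (x k).natAbs) ⟨⟨0, by omega⟩, Finset.mem_univ _⟩
    refine ⟨i, ?_, fun k => hi k (Finset.mem_univ _)⟩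
    by_contra hc'
    exact hc ⟨i, by simpa using hc', fun k => hi k (Finset.mem_univ _)⟩
  · rintro ⟨i, h1, h2⟩ ⟨j, h3, h4⟩
    have e : i = j := by
      by_contra hc
      exact Gd_abs_ne ha h hc (le_antisymm (h4 i) (h2 j))
    subst e
    simp at h1 h3
    omega

/-- count of the class with prescribed first and last sign. -/
noncomputable def g (n : ℕ) (a M : ℤ) (b b' : Bool) : ℕ :=
  cnt n a M (fun x => Fst b x ∧ Lst b' x)

/-- Moving all positions by `d`. -/
lemma shift_lemma (n : ℕ) (a M d : ℤ) (hd : 0 ≤ d) (b b' : Bool) :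
    cnt n a M (fun x => (Fst b x ∧ Lst b' x) ∧ ∀ k, d < (x k).natAbs) = g n a (M - d) b b' := by
  unfold g cnt
  apply ncard_eq_of_inv (fun x k => if 0 < x k then x k - d else x k + d)
    (fun x k => if 0 < x k then x k + d else x k - d)
  · rintro x ⟨⟨h0, h1⟩, ⟨⟨i, hi, hi'⟩, ⟨j, hj, hj'⟩⟩, h3⟩
    refine ⟨⟨fun i => ?_, fun i j hij => ?_⟩, ⟨i, ?_, fun k => ?_⟩, ⟨j, ?_, fun k => ?_⟩⟩
    · have := h0 i
      have := h3 i
      dsimp only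
      split_ifs <;> omega
    · have := h0 i
      have := h3 i
      have := h0 j
      have := h3 j
      have := h1 i j hij
      unfold PairOK at *
      dsimp only
      split_ifs <;> omega
    · rw [← hi]
      have := h0 i
      have := h3 i
      dsimp only
      split_ifs <;> omega
    · have := h0 i
      have := h3 i
      have := h0 k
      have := h3 k
      have := hi' k
      dsimp only
      split_ifs <;> omega
    · rw [← hj]
      have := h0 j
      have := h3 j
      dsimp only
      split_ifs <;> omega
    · have := h0 j
      have := h3 j
      have := h0 k
      have := h3 k
      have := hj' k
      dsimp only
      split_ifs <;> omega
  · rintro x ⟨⟨h0, h1⟩, ⟨i, hi, hi'⟩, ⟨j, hj, hj'⟩⟩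
    refine ⟨⟨fun i => ?_, fun i j hij => ?_⟩, ⟨⟨i, ?_, fun k => ?_⟩, ⟨j, ?_, fun k => ?_⟩⟩, fun k => ?_⟩
    · have := h0 i
      dsimp only
      split_ifs <;> omega
    · have := h0 i
      have := h0 j
      have := h1 i j hij
      unfold PairOK at *
      dsimp only
      split_ifs <;> omega
    · rw [← hi]
      have := h0 i
      dsimp only
      split_ifs <;> omega
    · have := h0 i
      have := h0 k
      have := hi' k
      dsimp only
      split_ifs <;> omega
    · rw [← hj]
      have := h0 j
      dsimp only
      split_ifs <;> omega
    · have := h0 j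
      have := h0 k
      have := hj' k
      dsimp only
      split_ifs <;> omega
    · have := h0 k
      dsimp only
      split_ifs <;> omega
  · rintro x ⟨⟨h0, h1⟩, -, h3⟩
    funext k
    have := h0 k
    have := h3 k
    dsimp only
    split_ifs <;> omega
  · rintro x ⟨⟨h0, h1⟩, -⟩
    funext k
    have := h0 k
    dsimp only
    split_ifs <;> omega

/-- Reversal together with negation. -/
lemma g_reverse (n : ℕ) (a M : ℤ) : g n a M true true = g n a M false false := by
  unfold g cnt
  apply ncard_eq_of_inv (fun x k => if 0 < x k then x k - (M + 1) else x k + (M + 1))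
    (fun x k => if 0 < x k then x k - (M + 1) else x k + (M + 1))
  · rintro x ⟨⟨h0, h1⟩, ⟨i, hi, hi'⟩, ⟨j, hj, hj'⟩⟩
    simp only [iff_true] at hi hj
    refine ⟨⟨fun i => ?_, fun i j hij => ?_⟩, ⟨j, ?_, fun k => ?_⟩, ⟨i, ?_, fun k => ?_⟩⟩
    · have := h0 i
      dsimp only
      split_ifs <;> omega
    · have := h0 i
      have := h0 j
      have := h1 i j hij
      unfold PairOK at *
      dsimp only
      split_ifs <;> omega
    · have := h0 j
      simp only [Bool.false_eq_true, iff_false, not_lt]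
      split_ifs <;> omega
    · have := h0 j
      have := h0 k
      have := hj' k
      dsimp only
      split_ifs <;> omega
    · have := h0 i
      simp only [Bool.false_eq_true, iff_false, not_lt]
      split_ifs <;> omega
    · have := h0 i
      have := h0 k
      have := hi' k
      dsimp only
      split_ifs <;> omega
  · rintro x ⟨⟨h0, h1⟩, ⟨i, hi, hi'⟩, ⟨j, hj, hj'⟩⟩
    simp only [Bool.false_eq_true, iff_false, not_lt] at hi hj
    refine ⟨⟨fun i => ?_, fun i j hij => ?_⟩, ⟨j, ?_, fun k => ?_⟩, ⟨i, ?_, fun k => ?_⟩⟩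
    · have := h0 i
      dsimp only
      split_ifs <;> omega
    · have := h0 i
      have := h0 j
      have := h1 i j hij
      unfold PairOK at *
      dsimp only
      split_ifs <;> omega
    · have := h0 j
      simp only [iff_true]
      split_ifs <;> omega
    · have := h0 j
      have := h0 k
      have := hj' k
      dsimp only
      split_ifs <;> omega
    · have := h0 i
      simp only [iff_true]
      split_ifs <;> omega
    · have := h0 i
      have := h0 k
      have := hi' k
      dsimp only
      split_ifs <;> omega
  · rintro x ⟨⟨h0, h1⟩, -⟩
    funext k
    have := h0 k
    dsimp only
    split_ifs <;> omega
  · rintro x ⟨⟨h0, h1⟩, -⟩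
    funext k
    have := h0 k
    dsimp only
    split_ifs <;> omega

/-- four-class split -/
lemma cnt_four {n : ℕ} (hn : 2 ≤ n) {a M : ℤ} (ha : 0 ≤ a) (P : (Fin n → ℤ) → Prop) :
    cnt n a M P = cnt n a M (fun x => (Fst true x ∧ Lst true x) ∧ P x)
      + cnt n a M (fun x => (Fst true x ∧ Lst false x) ∧ P x)
      + cnt n a M (fun x => (Fst false x ∧ Lst true x) ∧ P x)
      + cnt n a M (fun x => (Fst false x ∧ Lst false x) ∧ P x) := by
  rw [cnt_split n a M P (Fst true), cnt_split n a M (fun x => P x ∧ Fst true x) (Lst true),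
    cnt_split n a M (fun x => P x ∧ ¬ Fst true x) (Lst true), ← add_assoc]
  congr 1
  · congr 1
    · congr 1
      · exact cnt_congr fun x h => by tauto
      · exact cnt_congr fun x h => by rw [Lst_not hn ha h]; tauto
    · exact cnt_congr fun x h => by rw [Fst_not hn ha h]; tauto
  · exact cnt_congr fun x h => by rw [Lst_not hn ha h, Fst_not hn ha h]; tauto

/-- If the first letter is big then small letters are far from the origin. -/
lemma far_of_fst {n : ℕ} {a M : ℤ} (ha : 0 ≤ a) {x : Fin n → ℤ} (h : Gd a M x)
    (hf : Fst false x) (k : Fin n) (hk : 0 < x k) : a < x k := by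
  obtain ⟨i, hi, hi'⟩ := hf
  simp only [Bool.false_eq_true, iff_false, not_lt] at hi
  have h' := (Gd_iff a M ha x).1 h
  have hne : i ≠ k := by rintro rfl; omega
  have hL := h'.2 i k hne (hi' k)
  have := h.1 i
  unfold Lt at hL
  omega

lemma far_of_lst {n : ℕ} {a M : ℤ} (ha : 0 ≤ a) {x : Fin n → ℤ} (h : Gd a M x)
    (hf : Lst true x) (k : Fin n) (hk : x k < 0) : a - M < x k := by
  obtain ⟨i, hi, hi'⟩ := hf
  simp only [iff_true] at hi
  have h' := (Gd_iff a M ha x).1 h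
  have hne : k ≠ i := by rintro rfl; omega
  have hL := h'.2 k i hne (hi' k)
  have := h.1 i
  unfold Lt at hL
  omega

lemma Gd_le {n : ℕ} {a M d : ℤ} (hd : 0 ≤ d) (x : Fin n → ℤ) :
    Gd a (M - d) x ↔ Gd a M x ∧ ∀ k, ((x k).natAbs : ℤ) ≤ M - d := by
  unfold Gd
  constructor
  · rintro ⟨h0, h1⟩
    exact ⟨⟨fun i => by have := h0 i; omega, h1⟩, fun i => by have := h0 i; omega⟩
  · rintro ⟨⟨h0, h1⟩, h2⟩
    exact ⟨fun i => by have := h0 i; have := h2 i; omega, h1⟩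

lemma cnt_sub {n : ℕ} {a M d : ℤ} (hd : 0 ≤ d) (P : (Fin n → ℤ) → Prop) :
    cnt n a (M - d) P = cnt n a M (fun x => P x ∧ ∀ k, ((x k).natAbs : ℤ) ≤ M - d) := by
  unfold cnt
  congr 1
  ext x
  have := Gd_le (a := a) (M := M) hd x
  constructor
  · rintro ⟨h1, h2⟩
    exact ⟨(this.1 h1).1, h2, (this.1 h1).2⟩
  · rintro ⟨h1, h2, h3⟩
    exact ⟨this.2 ⟨h1, h3⟩, h2⟩

/-- Type `C` predicate counts, expressed by classes. -/
lemma NC_class {n : ℕ} (hn : 2 ≤ n) {a M f c : ℤ} (hf : 0 ≤ f) (hc : 0 ≤ c) (hfc : f + c = a) :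
    cnt n a M (fun x => Apos f x ∧ ∀ k, x k < 0 → c - M ≤ x k) =
      g n a (M - f) true true + g n a (M - a) true false
        + g n a M false true + g n a (M - c) false false := by
  have ha : 0 ≤ a := by omega
  rw [cnt_four hn ha]
  congr 1
  · congr 1
    · congr 1
      · rw [← shift_lemma n a M f hf]
        refine cnt_congr fun x h => and_congr_right fun ⟨h1, h2⟩ => ?_
        constructor
        · rintro ⟨h3, -⟩ k
          obtain ⟨i, hi, hi'⟩ := h1
          have := h3 i (hi.2 rfl)
          have := hi' k
          omega
        · intro h3
          refine ⟨fun k hk => by have := h3 k; omega, fun k hk => ?_⟩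
          have := far_of_lst ha h h2 k hk
          omega
      · have e : M - a = (M - c) - f := by omega
        rw [e, ← shift_lemma n a (M - c) f hf, cnt_sub hc]
        refine cnt_congr fun x h => ?_
        rw [and_assoc (a := Fst true x ∧ Lst false x)]
        refine and_congr_right fun ⟨h1, h2⟩ => ?_
        obtain ⟨i, hi, hi'⟩ := h1
        obtain ⟨j, hj, hj'⟩ := h2
        simp only [Bool.false_eq_true, iff_false, not_lt] at hj
        constructor
        · rintro ⟨h3, h4⟩
          refine ⟨fun k => ?_, fun k => ?_⟩
          · have := h3 i (hi.2 rfl)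
            have := hi' k
            omega
          · have := h.1 j
            have := h4 j (by omega)
            have := hj' k
            omega
        · rintro ⟨h3, h4⟩
          refine ⟨fun k hk => ?_, fun k hk => ?_⟩
          · have := h3 k; omega
          · have := h4 k; omega
    · refine cnt_congr fun x h => ?_
      refine ⟨fun h => h.1, fun h' => ⟨h', fun k hk => ?_, fun k hk => ?_⟩⟩
      · have := far_of_fst ha h h'.1 k hk; omega
      · have := far_of_lst ha h h'.2 k hk; omega
  · unfold g
    rw [cnt_sub hc]
    refine cnt_congr fun x h => and_congr_right fun ⟨h1, h2⟩ => ?_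
    constructor
    · rintro ⟨-, h4⟩ k
      obtain ⟨j, hj, hj'⟩ := h2
      simp only [Bool.false_eq_true, iff_false, not_lt] at hj
      have := h.1 j
      have := h4 j (by omega)
      have := hj' k
      omega
    · intro h3
      refine ⟨fun k hk => ?_, fun k hk => ?_⟩
      · have := far_of_fst ha h h1 k hk; omega
      · have := h3 k; omega

/-- Order reversal on a finite set, identity elsewhere. -/
noncomputable def revOn {n : ℕ} (K : Finset (Fin n)) : Equiv.Perm (Fin n) :=
  Equiv.Perm.ofSubtype (p := fun i => i ∈ K)
    (((K.orderIsoOfFin rfl).toEquiv.symm.trans Fin.revPerm).trans (K.orderIsoOfFin rfl).toEquiv)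

lemma revOn_not_mem {n : ℕ} (K : Finset (Fin n)) {i : Fin n} (h : i ∉ K) : revOn K i = i :=
  Equiv.Perm.ofSubtype_apply_of_not_mem _ h

lemma revOn_apply {n : ℕ} (K : Finset (Fin n)) {i : Fin n} (h : i ∈ K) :
    revOn K i = (K.orderIsoOfFin rfl) (Fin.rev ((K.orderIsoOfFin rfl).symm ⟨i, h⟩)) := by
  unfold revOn
  rw [Equiv.Perm.ofSubtype_apply_of_mem (p := fun i => i ∈ K) _ h]
  rfl

lemma revOn_mem {n : ℕ} (K : Finset (Fin n)) {i : Fin n} (h : i ∈ K) : revOn K i ∈ K := by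
  rw [revOn_apply K h]
  exact Subtype.property _

lemma revOn_revOn {n : ℕ} (K : Finset (Fin n)) (i : Fin n) : revOn K (revOn K i) = i := by
  by_cases h : i ∈ K
  · rw [revOn_apply K (revOn_mem K h)]
    have : (⟨revOn K i, revOn_mem K h⟩ : K) =
        (K.orderIsoOfFin rfl) (Fin.rev ((K.orderIsoOfFin rfl).symm ⟨i, h⟩)) :=
      Subtype.ext (revOn_apply K h)
    rw [this]
    simp
  · rw [revOn_not_mem K h, revOn_not_mem K h]

lemma revOn_lt {n : ℕ} (K : Finset (Fin n)) {i j : Fin n} (hi : i ∈ K) (hj : j ∈ K) (h : i < j) :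
    revOn K j < revOn K i := by
  rw [revOn_apply K hi, revOn_apply K hj]
  have h1 : (⟨i, hi⟩ : K) < ⟨j, hj⟩ := h
  have : (K.orderIsoOfFin rfl) (Fin.rev ((K.orderIsoOfFin rfl).symm ⟨j, hj⟩)) <
    (K.orderIsoOfFin rfl) (Fin.rev ((K.orderIsoOfFin rfl).symm ⟨i, hi⟩)) := by
    rw [OrderIso.lt_iff_lt, Fin.rev_lt_rev, OrderIso.lt_iff_lt]
    exact h1
  exact this

/-- The pair condition for the forward order. -/
def PairOK' (a u v : ℤ) : Prop :=
  (0 < u → 0 < v → (u < v ∨ v + a < u)) ∧ (u < 0 → v < 0 → (v < u ∨ u + a < v)) ∧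
  (0 < u → v < 0 → (u + v < 0 ∨ a < u + v)) ∧ (u < 0 → 0 < v → (u + v < 0 ∨ a < u + v))

/-- Good configurations for the forward order. -/
def Gd' {n : ℕ} (a M : ℤ) (x : Fin n → ℤ) : Prop :=
  (∀ i, x i ≠ 0 ∧ -M ≤ x i ∧ x i ≤ M) ∧ ∀ i j, i < j → PairOK' a (x i) (x j)

lemma Gd_forward {n : ℕ} (a M : ℤ) (P : (Fin n → ℤ) → Prop)
    (hP : ∀ (τ : Equiv.Perm (Fin n)) x, P x → P (x ∘ τ)) :
    cnt n a M P = Set.ncard {x : Fin n → ℤ | Gd' a M x ∧ P x} := by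
  classical
  unfold cnt
  have key : ∀ x : Fin n → ℤ,
      (Finset.univ.filter fun i => (x ∘ revOn (Finset.univ.filter fun i => x i < 0)) i < 0) =
        (Finset.univ.filter fun i => x i < 0) := by
    intro x
    ext i
    set K := (Finset.univ.filter fun i => x i < 0) with hK
    have hm : ∀ i, i ∈ K ↔ x i < 0 := by intro i; simp [hK]
    simp only [Finset.mem_filter, Finset.mem_univ, true_and, Function.comp]
    by_cases hi : i ∈ K
    · have := revOn_mem K hi
      rw [hm] at this hi
      simp [this, hi, hm]
    · rw [revOn_not_mem K hi, hm]
  have inv : ∀ x : Fin n → ℤ,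
      (x ∘ revOn (Finset.univ.filter fun i => x i < 0)) ∘ revOn (Finset.univ.filter fun i =>
        (x ∘ revOn (Finset.univ.filter fun i => x i < 0)) i < 0) = x := by
    intro x
    rw [key x]
    funext i
    simp [revOn_revOn]
  refine ncard_eq_of_inv (fun x => x ∘ revOn (Finset.univ.filter fun i => x i < 0))
    (fun x => x ∘ revOn (Finset.univ.filter fun i => x i < 0)) ?_ ?_ (fun x _ => inv x)
    (fun x _ => inv x)
  · rintro x ⟨⟨h0, h1⟩, h2⟩
    refine ⟨⟨fun i => h0 _, fun i j hij => ?_⟩, hP _ _ h2⟩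
    set K := (Finset.univ.filter fun i => x i < 0) with hK
    have hm : ∀ i, i ∈ K ↔ x i < 0 := by intro i; simp [hK]
    have m1 : ∀ i, i ∈ K → x (revOn K i) < 0 := fun i hi => (hm _).1 (revOn_mem K hi)
    simp only [Function.comp]
    by_cases hi : i ∈ K <;> by_cases hj : j ∈ K
    · have := h1 _ _ (revOn_lt K hi hj hij)
      have := m1 _ hi
      have := m1 _ hj
      unfold PairOK PairOK' at *
      omega
    · have e := revOn_not_mem K hj
      have := m1 _ hi
      have hj' := hj
      rw [hm] at hj'
      have hne : revOn K i ≠ j := by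
        intro h; rw [h] at this; omega
      rw [e]
      rcases lt_or_gt_of_ne hne with h | h
      · have := h1 _ _ h
        unfold PairOK PairOK' at *
        omega
      · have := h1 _ _ h
        unfold PairOK PairOK' at *
        omega
    · have e := revOn_not_mem K hi
      have := m1 _ hj
      have hi' := hi
      rw [hm] at hi'
      have hne : revOn K j ≠ i := by
        intro h; rw [h] at this; omega
      rw [e]
      rcases lt_or_gt_of_ne hne with h | h
      · have := h1 _ _ h
        unfold PairOK PairOK' at *
        omega
      · have := h1 _ _ h
        unfold PairOK PairOK' at *
        omega
    · rw [revOn_not_mem K hj, revOn_not_mem K hi]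
      rw [hm] at hi hj
      have := h1 _ _ hij
      unfold PairOK PairOK' at *
      omega
  · rintro x ⟨⟨h0, h1⟩, h2⟩
    refine ⟨⟨fun i => h0 _, fun i j hij => ?_⟩, hP _ _ h2⟩
    set K := (Finset.univ.filter fun i => x i < 0) with hK
    have hm : ∀ i, i ∈ K ↔ x i < 0 := by intro i; simp [hK]
    have m1 : ∀ i, i ∈ K → x (revOn K i) < 0 := fun i hi => (hm _).1 (revOn_mem K hi)
    simp only [Function.comp]
    by_cases hi : i ∈ K <;> by_cases hj : j ∈ K
    · have := h1 _ _ (revOn_lt K hi hj hij)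
      have := m1 _ hi
      have := m1 _ hj
      unfold PairOK PairOK' at *
      omega
    · have e := revOn_not_mem K hj
      have := m1 _ hi
      have hj' := hj
      rw [hm] at hj'
      have hne : revOn K i ≠ j := by
        intro h; rw [h] at this; omega
      rw [e]
      rcases lt_or_gt_of_ne hne with h | h
      · have := h1 _ _ h
        unfold PairOK PairOK' at *
        omega
      · have := h1 _ _ h
        unfold PairOK PairOK' at *
        omega
    · have e := revOn_not_mem K hi
      have := m1 _ hj
      have hi' := hi
      rw [hm] at hi'
      have hne : revOn K j ≠ i := by
        intro h; rw [h] at this; omega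
      rw [e]
      rcases lt_or_gt_of_ne hne with h | h
      · have := h1 _ _ h
        unfold PairOK PairOK' at *
        omega
      · have := h1 _ _ h
        unfold PairOK PairOK' at *
        omega
    · rw [revOn_not_mem K hj, revOn_not_mem K hi]
      rw [hm] at hi hj
      have := h1 _ _ hij
      unfold PairOK PairOK' at *
      omega

lemma Lst_perm {n : ℕ} (b : Bool) (τ : Equiv.Perm (Fin n)) (x : Fin n → ℤ) (h : Lst b x) :
    Lst b (x ∘ τ) := by
  obtain ⟨i, hi, hi'⟩ := h
  refine ⟨τ.symm i, by simpa using hi, fun k => by simpa using hi' (τ k)⟩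

/-- Rotation of the letters. -/
lemma letter_rotation {n : ℕ} (a M : ℤ) (ha : 0 ≤ a) :
    cnt n a M (fun x => Apos a x ∧ Lst false x) = cnt n a M (fun x => Lst true x) := by
  rw [Gd_forward, Gd_forward]
  · apply ncard_eq_of_inv (fun x k => if 0 < x k then a - x k else - x k)
      (fun x k => if 0 < x k then - x k else a - x k)
    · rintro x ⟨⟨h0, h1⟩, h2, ⟨i, hi, hi'⟩⟩
      simp only [Bool.false_eq_true, iff_false, not_lt] at hi
      refine ⟨⟨fun i => ?_, fun i j hij => ?_⟩, ⟨i, ?_, fun k => ?_⟩⟩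
      · have := h0 i
        have := h2 i
        dsimp only
        split_ifs <;> omega
      · have := h0 i
        have := h2 i
        have := h0 j
        have := h2 j
        have := h1 i j hij
        unfold PairOK' at *
        dsimp only
        split_ifs <;> omega
      · have := h0 i
        simp only [iff_true]
        split_ifs <;> omega
      · have := h0 i
        have := h0 k
        have := h2 k
        have := hi' k
        dsimp only
        split_ifs <;> omega
    · rintro x ⟨⟨h0, h1⟩, ⟨i, hi, hi'⟩⟩
      simp only [iff_true] at hi
      have hb : ∀ k, x k < 0 → a - M < x k ∧ - x k + a < x i := by
        intro k hk
        have hne : i ≠ k := by rintro rfl; omega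
        have := h0 i
        have := h0 k
        have := hi' k
        rcases lt_or_gt_of_ne hne with h | h
        · have := h1 _ _ h
          unfold PairOK' at *
          omega
        · have := h1 _ _ h
          unfold PairOK' at *
          omega
      refine ⟨⟨fun i => ?_, fun i j hij => ?_⟩, fun k => ?_, ⟨i, ?_, fun k => ?_⟩⟩
      · have := h0 i
        have := hb i
        dsimp only
        split_ifs <;> omega
      · have := h0 i
        have := hb i
        have := h0 j
        have := hb j
        have := h1 i j hij
        unfold PairOK' at *
        dsimp only
        split_ifs <;> omega
      · have := h0 k
        dsimp only
        split_ifs <;> omega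
      · have := h0 i
        simp only [Bool.false_eq_true, iff_false, not_lt]
        split_ifs <;> omega
      · have := h0 i
        have := h0 k
        have := hb k
        have := hi' k
        dsimp only
        split_ifs <;> omega
    · rintro x ⟨⟨h0, h1⟩, h2, -⟩
      funext k
      have := h0 k
      have := h2 k
      dsimp only
      split_ifs <;> omega
    · rintro x ⟨⟨h0, h1⟩, -⟩
      funext k
      have := h0 k
      dsimp only
      split_ifs <;> omega
  · intro τ x h
    exact Lst_perm _ _ _ h
  · rintro τ x ⟨h1, h2⟩
    exact ⟨fun k => h1 _, Lst_perm _ _ _ h2⟩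

/-- Comparison of the class counts. -/
lemma LB_LS {n : ℕ} (hn : 2 ≤ n) (a M : ℤ) (ha : 0 ≤ a) :
    cnt n a M (fun x => Apos a x ∧ Lst false x) + g n a (M - a) true true =
      cnt n a M (fun x => Apos a x ∧ Lst true x) + g n a M true true := by
  rw [letter_rotation a M ha, ← shift_lemma n a M a ha true true]
  unfold g
  rw [cnt_split n a M (fun x => Lst true x) (Apos a),
    cnt_split n a M (fun x => Fst true x ∧ Lst true x) (fun x => Apos a x)]
  have e1 : cnt n a M (fun x => Lst true x ∧ Apos a x) =
    cnt n a M (fun x => Apos a x ∧ Lst true x) := cnt_congr fun x h => by tauto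
  have e2 : cnt n a M (fun x => Lst true x ∧ ¬ Apos a x) =
      cnt n a M (fun x => (Fst true x ∧ Lst true x) ∧ ¬ Apos a x) := by
    refine cnt_congr fun x h => ⟨fun ⟨h1, h2⟩ => ⟨⟨?_, h1⟩, h2⟩, fun h => ⟨h.1.2, h.2⟩⟩
    by_contra hc
    exact h2 (far_of_fst ha h ((Fst_not hn ha h).1 hc))
  have e3 : cnt n a M (fun x => (Fst true x ∧ Lst true x) ∧ ∀ k, a < (x k).natAbs) =
      cnt n a M (fun x => (Fst true x ∧ Lst true x) ∧ Apos a x) := by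
    refine cnt_congr fun x h => and_congr_right fun ⟨h1, h2⟩ => ⟨fun h3 k hk => ?_, fun h3 k => ?_⟩
    · have := h3 k; omega
    · obtain ⟨i, hi, hi'⟩ := h1
      have := h3 i (hi.2 rfl)
      have := hi' k
      omega
  omega

lemma upd {n : ℕ} {a M M' : ℤ} (ha : 0 ≤ a) {x : Fin n → ℤ} {i j : Fin n} {v : ℤ}
    (h : Gd a M x) (hL : L2 i j x) (hv : (x j).natAbs < v.natAbs) (hM : (v.natAbs : ℤ) ≤ M')
    (hj : (v.natAbs : ℤ) ≤ (x j).natAbs + a → (0 < x j ∧ v < 0) ∨ (0 < x j ∧ 0 < v ∧ j.val < i.val) ∨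
      (x j < 0 ∧ v < 0 ∧ i.val < j.val)) :
    Gd a M' (Function.update x i v) ∧ L2 i j (Function.update x i v) := by
  rw [Gd_iff a M ha] at h
  obtain ⟨h0, h1⟩ := h
  obtain ⟨hL1, hL2⟩ := hL
  have hji : j ≠ i := by rintro rfl; omega
  have hk : ∀ k, k ≠ i → (v.natAbs : ℤ) ≤ (x k).natAbs + a →
      (0 < x k ∧ v < 0) ∨ (0 < x k ∧ 0 < v ∧ k.val < i.val) ∨
      (x k < 0 ∧ v < 0 ∧ i.val < k.val) := by
    intro k hki hd
    by_cases hkj : k = j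
    · subst hkj; exact hj hd
    · have e1 := hL2 k hki
      have e2 := h1 k j hkj e1 (by omega)
      have e3 := hj (by omega)
      unfold Lt at e2
      omega
  refine ⟨(Gd_iff a M' ha _).2 ⟨fun k => ?_, fun k l hkl => ?_⟩, ?_, fun k hk => ?_⟩
  · by_cases hki : k = i
    · subst hki
      simp only [Function.update_self]
      omega
    · simp only [Function.update_of_ne hki]
      have := h0 k
      have := hL2 k hki
      omega
  · unfold Lt
    by_cases hki : k = i
    · subst hki
      simp only [Function.update_self, Function.update_of_ne hkl.symm]
      have := hL2 l hkl.symm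
      omega
    · by_cases hli : l = i
      · subst hli
        simp only [Function.update_self, Function.update_of_ne hkl]
        intro _ h3
        exact hk k hki h3
      · simp only [Function.update_of_ne hki, Function.update_of_ne hli]
        exact h1 k l hkl
  · simp only [Function.update_self, Function.update_of_ne hji]
    exact hv
  · simp only [Function.update_of_ne hji, Function.update_of_ne hk]
    exact hL2 k hk

lemma cnt3_reflect {n : ℕ} {a M M' : ℤ} (s : ℤ) {P Q : Fin n → Fin n → (Fin n → ℤ) → Prop}
    (hPQ : ∀ i j x, Gd a M x → P i j x →
      Gd a M' (Function.update x i (s - x i)) ∧ Q i j (Function.update x i (s - x i)))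
    (hQP : ∀ i j x, Gd a M' x → Q i j x →
      Gd a M (Function.update x i (s - x i)) ∧ P i j (Function.update x i (s - x i))) :
    cnt3 n a M P = cnt3 n a M' Q := by
  unfold cnt3
  have inv : ∀ (i : Fin n) (x : Fin n → ℤ), Function.update (Function.update x i (s - x i)) i
      (s - Function.update x i (s - x i) i) = x := by
    intro i x
    simp
  refine ncard_eq_of_inv (fun z => (z.1, Function.update z.2 z.1.1 (s - z.2 z.1.1)))
    (fun z => (z.1, Function.update z.2 z.1.1 (s - z.2 z.1.1))) ?_ ?_ ?_ ?_
  · rintro z ⟨h1, h2⟩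
    exact hPQ _ _ _ h1 h2
  · rintro z ⟨h1, h2⟩
    exact hQP _ _ _ h1 h2
  · rintro z -
    exact Prod.ext rfl (inv _ _)
  · rintro z -
    exact Prod.ext rfl (inv _ _)

/-- The marked predicate behind `y`. -/
def Yp {n : ℕ} (a : ℤ) (i j : Fin n) (x : Fin n → ℤ) : Prop :=
  (L2 i j x ∧ Apos a x) ∧ i.val < j.val ∧ x i < 0

/-- number of configurations whose last letter is big and of smaller index than the previous. -/
noncomputable def yc (n : ℕ) (a M : ℤ) : ℕ := cnt3 n a M (Yp a)

lemma Lst_L2 {n : ℕ} {a M : ℤ} {x : Fin n → ℤ} (h : Gd a M x) {i j : Fin n}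
    (hL : L2 i j x) : (Lst false x ↔ x i < 0) ∧ (Lst true x ↔ ¬ x i < 0) := by
  have hm : ∀ k, (x k).natAbs ≤ (x i).natAbs := by
    intro k
    by_cases hk : k = i
    · rw [hk]
    · have := hL.2 k hk
      have := hL.1
      omega
  have hu : ∀ l, (∀ k, (x k).natAbs ≤ (x l).natAbs) → l = i := by
    intro l hl
    by_contra hc
    have := hL.2 l hc
    have := hL.1
    have := hl i
    omega
  have h0 := h.1 i
  constructor
  · constructor
    · rintro ⟨l, h1, h2⟩
      rw [hu l h2] at h1
      simp only [Bool.false_eq_true, iff_false, not_lt] at h1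
      omega
    · intro h1
      exact ⟨i, by simp; omega, hm⟩
  · constructor
    · rintro ⟨l, h1, h2⟩
      rw [hu l h2] at h1
      simp only [iff_true] at h1
      omega
    · intro h1
      exact ⟨i, by simp; omega, hm⟩

lemma L2_ne {n : ℕ} {x : Fin n → ℤ} {i j : Fin n} (h : L2 i j x) : j ≠ i := by
  rintro rfl; exact lt_irrefl _ h.1

lemma yc_diff {n : ℕ} (hn : 2 ≤ n) (a M : ℤ) (ha : 0 ≤ a) :
    yc n a M + cnt n a M (fun x => Apos a x ∧ Lst true x) =
      cnt n a M (fun x => Apos a x ∧ Lst false x) + yc n a (M - a) := by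
  rw [cnt_eq_cnt3 hn ha, cnt_eq_cnt3 hn ha,
    cnt3_split n a M (fun i j x => L2 i j x ∧ Apos a x ∧ Lst true x) (fun i j _ => i.val < j.val),
    cnt3_split n a M (fun i j x => L2 i j x ∧ Apos a x ∧ Lst false x) (fun i j _ => i.val < j.val)]
  have e1 : cnt3 n a M (fun i j x => (L2 i j x ∧ Apos a x ∧ Lst false x) ∧ i.val < j.val) =
      yc n a M := by
    refine cnt3_congr fun i j x h => ?_
    unfold Yp
    constructor
    · rintro ⟨⟨h1, h2, h3⟩, h4⟩
      exact ⟨⟨h1, h2⟩, h4, (Lst_L2 h h1).1.1 h3⟩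
    · rintro ⟨⟨h1, h2⟩, h4, h3⟩
      exact ⟨⟨h1, h2, (Lst_L2 h h1).1.2 h3⟩, h4⟩
  have e2 : cnt3 n a M (fun i j x => (L2 i j x ∧ Apos a x ∧ Lst true x) ∧ i.val < j.val) =
      yc n a (M - a) := by
    refine cnt3_reflect a ?_ ?_
    · rintro i j x h ⟨⟨h1, h2, h3⟩, h4⟩
      have h5 := (Lst_L2 h h1).2.1 h3
      have hji := L2_ne h1
      have h0i := h.1 i
      have h0j := h.1 j
      have hT := ((Gd_iff a M ha x).1 h).2 j i hji h1.1.le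
      unfold Lt at hT
      have := h1.1
      obtain ⟨u1, u2⟩ := upd (v := a - x i) (M' := M - a) ha h h1 (by omega) (by omega) (by omega)
      refine ⟨u1, ⟨u2, fun k => ?_⟩, h4, ?_⟩
      · by_cases hk : k = i
        · subst hk
          simp only [Function.update_self]
          omega
        · simp only [Function.update_of_ne hk]
          exact h2 k
      · simp only [Function.update_self]
        omega
    · rintro i j x h ⟨⟨h1, h2⟩, h4, h3⟩
      have hji := L2_ne h1
      have h0i := h.1 i
      have h0j := h.1 j
      have := h1.1
      obtain ⟨u1, u2⟩ := upd (v := a - x i) (M' := M) ha h h1 (by omega) (by omega) (by omega)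
      refine ⟨u1, ⟨u2, fun k => ?_, ?_⟩, h4⟩
      · by_cases hk : k = i
        · subst hk
          simp only [Function.update_self]
          omega
        · simp only [Function.update_of_ne hk]
          exact h2 k
      · rw [(Lst_L2 u1 u2).2]
        simp only [Function.update_self]
        omega
  have e3 : cnt3 n a M (fun i j x => (L2 i j x ∧ Apos a x ∧ Lst true x) ∧ ¬ i.val < j.val) =
      cnt3 n a M (fun i j x => (L2 i j x ∧ Apos a x ∧ Lst false x) ∧ ¬ i.val < j.val) := by
    refine cnt3_reflect 0 ?_ ?_
    · rintro i j x h ⟨⟨h1, h2, h3⟩, h4⟩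
      have h5 := (Lst_L2 h h1).2.1 h3
      have hji := L2_ne h1
      have hji' : j.val ≠ i.val := fun h => hji (Fin.ext h)
      have h0i := h.1 i
      have h0j := h.1 j
      have hT := ((Gd_iff a M ha x).1 h).2 j i hji h1.1.le
      unfold Lt at hT
      have := h1.1
      obtain ⟨u1, u2⟩ := upd (v := 0 - x i) (M' := M) ha h h1 (by omega) (by omega) (by omega)
      refine ⟨u1, ⟨u2, fun k => ?_, ?_⟩, h4⟩
      · by_cases hk : k = i
        · subst hk
          simp only [Function.update_self]
          omega
        · simp only [Function.update_of_ne hk]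
          exact h2 k
      · rw [(Lst_L2 u1 u2).1]
        simp only [Function.update_self]
        omega
    · rintro i j x h ⟨⟨h1, h2, h3⟩, h4⟩
      have h5 := (Lst_L2 h h1).1.1 h3
      have hji := L2_ne h1
      have hji' : j.val ≠ i.val := fun h => hji (Fin.ext h)
      have h0i := h.1 i
      have h0j := h.1 j
      have hT := ((Gd_iff a M ha x).1 h).2 j i hji h1.1.le
      unfold Lt at hT
      have := h1.1
      obtain ⟨u1, u2⟩ := upd (v := 0 - x i) (M' := M) ha h h1 (by omega) (by omega) (by omega)
      refine ⟨u1, ⟨u2, fun k => ?_, ?_⟩, h4⟩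
      · by_cases hk : k = i
        · subst hk
          have := h2 j
          simp only [Function.update_self]
          omega
        · simp only [Function.update_of_ne hk]
          exact h2 k
      · rw [(Lst_L2 u1 u2).2]
        simp only [Function.update_self]
        omega
  omega

lemma cnt_neg {n : ℕ} (hn : 2 ≤ n) {a M : ℤ} (hM : M < 0) (P : (Fin n → ℤ) → Prop) :
    cnt n a M P = 0 := by
  unfold cnt
  have : {x : Fin n → ℤ | Gd a M x ∧ P x} = ∅ := by
    ext x
    refine ⟨fun h => ?_, fun h => h.elim⟩
    have := h.1.1 ⟨0, by omega⟩
    omega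
  rw [this, Set.ncard_empty]

lemma cnt3_neg {n : ℕ} (hn : 2 ≤ n) {a M : ℤ} (hM : M < 0)
    (P : Fin n → Fin n → (Fin n → ℤ) → Prop) :
    cnt3 n a M P = 0 := by
  unfold cnt3
  have : {z : (Fin n × Fin n) × (Fin n → ℤ) | Gd a M z.2 ∧ P z.1.1 z.1.2 z.2} = ∅ := by
    ext x
    refine ⟨fun h => ?_, fun h => h.elim⟩
    have := h.1.1 ⟨0, by omega⟩
    omega
  rw [this, Set.ncard_empty]

lemma yc_eq_g {n : ℕ} (hn : 2 ≤ n) (a : ℤ) (ha : 1 ≤ a) (m : ℕ) :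
    ∀ M : ℤ, M < m → yc n a M = g n a M true true := by
  induction m with
  | zero =>
    intro M hM
    unfold yc g
    rw [cnt_neg hn (by simpa using hM), cnt3_neg hn (by simpa using hM)]
  | succ m ih =>
    intro M hM
    have h1 := ih (M - a) (by push_cast at hM; omega)
    have h2 := yc_diff hn a M (by omega)
    have h3 := LB_LS hn a M (by omega)
    omega

lemma cnt3_sub {n : ℕ} {a M d : ℤ} (hd : 0 ≤ d) (P : Fin n → Fin n → (Fin n → ℤ) → Prop) :
    cnt3 n a (M - d) P = cnt3 n a M (fun i j x => P i j x ∧ ∀ k, ((x k).natAbs : ℤ) ≤ M - d) := by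
  unfold cnt3
  congr 1
  ext z
  have := Gd_le (a := a) (M := M) hd z.2
  constructor
  · rintro ⟨h1, h2⟩
    exact ⟨(this.1 h1).1, h2, (this.1 h1).2⟩
  · rintro ⟨h1, h2, h3⟩
    exact ⟨this.2 ⟨h1, h3⟩, h2⟩

lemma yc_sub {n : ℕ} {a M d : ℤ} (hd : 0 ≤ d) :
    yc n a (M - d) = cnt3 n a M (fun i j x => Yp a i j x ∧ - x i ≤ M - d) := by
  unfold yc
  rw [cnt3_sub hd]
  refine cnt3_congr fun i j x h => and_congr_right fun ⟨⟨h1, h2⟩, h3, h4⟩ => ?_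
  constructor
  · intro h5
    have := h5 i
    omega
  · intro h5 k
    by_cases hk : k = i
    · subst hk; omega
    · have := h1.2 k hk
      have := h1.1
      omega

lemma ystar {n : ℕ} {a M f c : ℤ} (hf : 0 ≤ f) (hfc : f + c = a) (h1 : f ≤ c) (h2 : c ≤ f + 1) :
    cnt3 n a M (fun i j x => Yp a i j x ∧ - x i + (x j).natAbs ≤ 2 * M - a) + yc n a (M - a) =
      yc n a (M - f) + yc n a (M - c) := by
  have ha : 0 ≤ a := by omega
  rw [yc_sub hf, yc_sub (d := c) (by omega), yc_sub (d := a) ha,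
    cnt3_split n a M (fun i j x => Yp a i j x ∧ - x i + (x j).natAbs ≤ 2 * M - a)
      (fun i j x => - x i ≤ M - f),
    cnt3_split n a M (fun i j x => Yp a i j x ∧ - x i ≤ M - c)
      (fun i j x => - x i ≤ M - a)]
  have e1 : cnt3 n a M (fun i j x => (Yp a i j x ∧ - x i + (x j).natAbs ≤ 2 * M - a) ∧
      - x i ≤ M - f) = cnt3 n a M (fun i j x => Yp a i j x ∧ - x i ≤ M - f) := by
    refine cnt3_congr fun i j x h => ⟨fun h => ⟨h.1.1, h.2⟩, fun h' => ⟨⟨h'.1, ?_⟩, h'.2⟩⟩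
    obtain ⟨⟨⟨h1, h2⟩, h3, h4⟩, h5⟩ := h'
    have := h1.1
    omega
  have e2 : cnt3 n a M (fun i j x => (Yp a i j x ∧ - x i ≤ M - c) ∧ - x i ≤ M - a) =
      cnt3 n a M (fun i j x => Yp a i j x ∧ - x i ≤ M - a) :=
    cnt3_congr fun i j x h => ⟨fun h => ⟨h.1.1, h.2⟩, fun h' => ⟨⟨h'.1, by omega⟩, h'.2⟩⟩
  have e3 : cnt3 n a M (fun i j x => (Yp a i j x ∧ - x i + (x j).natAbs ≤ 2 * M - a) ∧
      ¬ - x i ≤ M - f) =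
      cnt3 n a M (fun i j x => (Yp a i j x ∧ - x i ≤ M - c) ∧ ¬ - x i ≤ M - a) := by
    refine cnt3_reflect (a - (2 * M + 1)) ?_ ?_
    · rintro i j x h ⟨⟨⟨⟨h1, h2⟩, h3, h4⟩, h5⟩, h6⟩
      have hji := L2_ne h1
      have h0i := h.1 i
      have h0j := h.1 j
      have := h1.1
      obtain ⟨u1, u2⟩ := upd (v := a - (2 * M + 1) - x i) (M' := M) ha h h1
        (by omega) (by omega) (by omega)
      refine ⟨u1, ⟨⟨⟨u2, fun k => ?_⟩, h3, ?_⟩, ?_⟩, ?_⟩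
      · by_cases hk : k = i
        · subst hk
          simp only [Function.update_self]
          omega
        · simp only [Function.update_of_ne hk]
          exact h2 k
      all_goals
        simp only [Function.update_self]
        omega
    · rintro i j x h ⟨⟨⟨⟨h1, h2⟩, h3, h4⟩, h5⟩, h6⟩
      have hji := L2_ne h1
      have h0i := h.1 i
      have h0j := h.1 j
      have := h1.1
      obtain ⟨u1, u2⟩ := upd (v := a - (2 * M + 1) - x i) (M' := M) ha h h1
        (by omega) (by omega) (by omega)
      refine ⟨u1, ⟨⟨⟨u2, fun k => ?_⟩, h3, ?_⟩, ?_⟩, ?_⟩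
      · by_cases hk : k = i
        · subst hk
          simp only [Function.update_self]
          omega
        · simp only [Function.update_of_ne hk]
          exact h2 k
      all_goals
        simp only [Function.update_self, Function.update_of_ne hji]
        omega
  omega

/-- The crossing condition of type `B`. -/
def Cr {n : ℕ} (a M : ℤ) (x : Fin n → ℤ) : Prop :=
  ∀ i j : Fin n, i < j → x i < 0 → ((x i).natAbs + (x j).natAbs : ℤ) ≤ 2 * M - a

lemma NB_class {n : ℕ} (hn : 2 ≤ n) {a M : ℤ} (ha : 0 ≤ a) :
    cnt n a M (fun x => Apos a x ∧ Cr a M x) + yc n a M = cnt n a M (fun x => Apos a x) +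
      cnt3 n a M (fun i j x => Yp a i j x ∧ - x i + (x j).natAbs ≤ 2 * M - a) := by
  unfold yc
  rw [cnt3_split n a M (Yp a) (fun i j x => - x i + (x j).natAbs ≤ 2 * M - a),
    cnt_split n a M (Apos a) (Cr a M)]
  have e : cnt n a M (fun x => Apos a x ∧ ¬ Cr a M x) =
      cnt3 n a M (fun i j x => Yp a i j x ∧ ¬ - x i + (x j).natAbs ≤ 2 * M - a) := by
    rw [cnt_eq_cnt3 hn ha]
    refine cnt3_congr fun l m x h => ?_
    unfold Yp
    constructor
    · rintro ⟨hL, hA, hc⟩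
      have main : l.val < m.val ∧ x l < 0 := by
        unfold Cr at hc
        push Not at hc
        obtain ⟨i, j, hij, hi, hs⟩ := hc
        have hT := ((Gd_iff a M ha x).1 h).2
        have hml := L2_ne hL
        have hlm := hL.1
        have b := fun k => h.1 k
        have bi := b i
        have bj := b j
        have bl := b l
        have bm := b m
        have hijv : i.val < j.val := hij
        have t0 := hT i j hij.ne
        have hji : (x j).natAbs < (x i).natAbs := by
          unfold Lt at t0
          omega
        have t1 := hT m l hml hlm.le (by
          by_cases hmi : m = i
          · subst hmi; omega
          · by_cases hli : l = i
            · subst hli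
              have := hL.2 j hij.ne'
              omega
            · have := hL.2 i (Ne.symm hli)
              omega)
        by_cases hli : l = i
        · subst hli
          refine ⟨?_, hi⟩
          by_cases hmj : m = j
          · subst hmj; exact hijv
          · have e1 := hL.2 j hij.ne'
            have t2 := hT j m (Ne.symm hmj) e1 (by omega)
            unfold Lt at t1 t2
            omega
        · have e1 := hL.2 i (Ne.symm hli)
          have t2 := hT i l (Ne.symm hli) (by omega) (by omega)
          by_cases hmi : m = i
          · subst hmi
            unfold Lt at t2
            omega
          · have t3 := hT i m (Ne.symm hmi) e1 (by omega)
            unfold Lt at t1 t2 t3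
            omega
      refine ⟨⟨⟨hL, hA⟩, main⟩, ?_⟩
      · unfold Cr at hc
        push Not at hc
        obtain ⟨i, j, hij, hi, hs⟩ := hc
        have hlm := hL.1
        by_cases hli : i = l
        · subst hli
          have := hL.2 j hij.ne'
          omega
        · have := hL.2 i hli
          by_cases hlj : j = l
          · subst hlj; omega
          · have := hL.2 j hlj
            omega
    · rintro ⟨⟨⟨hL, hA⟩, hlm, hl⟩, hs⟩
      refine ⟨hL, hA, fun hc => hs ?_⟩
      have := hc l m hlm hl
      omega
  omega

lemma main_count {n : ℕ} (hn : 2 ≤ n) {a M f c : ℤ} (ha : 1 ≤ a) (hf : 0 ≤ f) (hfc : f + c = a)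
    (h1 : f ≤ c) (h2 : c ≤ f + 1) :
    cnt n a M (fun x => Apos a x ∧ Cr a M x) =
      cnt n a M (fun x => Apos f x ∧ ∀ k, x k < 0 → c - M ≤ x k) := by
  have hy : ∀ M, yc n a M = g n a M true true := fun M =>
    yc_eq_g hn a ha (M.natAbs + 1) M (by omega)
  have k1 := NB_class hn (a := a) (M := M) (by omega)
  have k2 := ystar (n := n) (M := M) hf hfc h1 h2
  have k3 := NC_class hn (M := M) hf (show 0 ≤ c by omega) hfc
  have k4 := NC_class hn (M := M) (show 0 ≤ a by omega) (le_refl 0) (by omega : a + 0 = a)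
  have k5 : cnt n a M (fun x => Apos a x ∧ ∀ k, x k < 0 → 0 - M ≤ x k) =
      cnt n a M (fun x => Apos a x) :=
    cnt_congr fun x h => ⟨fun h => h.1, fun h' => ⟨h', fun k _ => by have := h.1 k; omega⟩⟩
  rw [sub_zero] at k4
  have r := fun M => g_reverse n a M
  simp only [← r] at k3 k4
  simp only [hy] at k1 k2
  omega

lemma avoids_iff {M a : ℕ} (haM : a ≤ M) (m : ℤ) (h1 : -(2 * M) ≤ m) (h2 : m ≤ 2 * M) :
    Avoids ((m : ℤ) : ZMod (2 * M + 1)) 0 (a : ℤ) ↔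
      (m < 0 ∨ a < m) ∧ a < m + (2 * M + 1) := by
  unfold Avoids
  constructor
  · intro h
    refine ⟨?_, ?_⟩
    · by_contra hc
      exact h m (by omega) (by omega) rfl
    · by_contra hc
      apply h (m + (2 * M + 1)) (by omega) (by omega)
      have : ((2 * M + 1 : ℕ) : ZMod (2 * M + 1)) = 0 := ZMod.natCast_self _
      push_cast at this ⊢
      rw [this, add_zero]
  · rintro ⟨h3, h4⟩ k hk1 hk2 he
    rw [ZMod.intCast_eq_intCast_iff_dvd_sub] at he
    obtain ⟨t, ht⟩ := he
    push_cast at ht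
    have t1 : t < 2 := by
      by_contra hc
      have : (2 * (M : ℤ) + 1) * 2 ≤ (2 * M + 1) * t :=
        mul_le_mul_of_nonneg_left (by omega) (by omega)
      omega
    have t2 : -1 < t := by
      by_contra hc
      have : (2 * (M : ℤ) + 1) * t ≤ (2 * M + 1) * (-1) :=
        mul_le_mul_of_nonneg_left (by omega) (by omega)
      omega
    interval_cases t <;> omega

/-- Transfer from residues to signed representatives. -/
lemma transfer {n M : ℕ} (P : (Fin n → ZMod (2 * M + 1)) → Prop) :
    Set.ncard {x : Fin n → ZMod (2 * M + 1) | P x} =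
      Set.ncard {y : Fin n → ℤ | (∀ i, -(M : ℤ) ≤ y i ∧ y i ≤ M) ∧
        P (fun i => ((y i : ℤ) : ZMod (2 * M + 1)))} := by
  refine ncard_eq_of_inv (fun x i => (x i).valMinAbs) (fun y i => ((y i : ℤ) : ZMod (2 * M + 1)))
    ?_ ?_ ?_ ?_
  · intro x hx
    refine ⟨fun i => ?_, ?_⟩
    · have := ZMod.valMinAbs_mem_Ioc (x i)
      rw [Set.mem_Ioc] at this
      push_cast at this
      dsimp only
      omega
    · simp only [ZMod.coe_valMinAbs]
      exact hx
  · intro y hy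
    exact hy.2
  · intro x hx
    funext i
    simp
  · intro y hy
    funext i
    have := hy.1 i
    rw [ZMod.valMinAbs_spec]
    refine ⟨rfl, ?_⟩
    rw [Set.mem_Ioc]
    push_cast
    omega

lemma N_B_eq {n M a : ℕ} (hn : 2 ≤ n) (haM : a ≤ M) :
    N_B n (2 * M + 1) 0 (a : ℤ) = cnt n a M (fun x => Apos a x ∧ Cr a M x) := by
  unfold N_B
  rw [transfer]
  unfold cnt
  congr 1
  ext y
  simp only [Set.mem_ofPred_eq]
  unfold Gd Apos Cr PairOK
  constructor
  · rintro ⟨hb, h1, h2⟩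
    have h1' : ∀ i, y i < 0 ∨ a < y i := fun i => by
      have := hb i
      exact ((avoids_iff haM (y i) (by omega) (by omega)).1 (h1 i)).1
    have h2' : ∀ i j, i < j → ((y i - y j < 0 ∨ a < y i - y j) ∧ a < y i - y j + (2 * M + 1)) ∧
        ((y i + y j < 0 ∨ a < y i + y j) ∧ a < y i + y j + (2 * M + 1)) := fun i j hij => by
      have := hb i
      have := hb j
      have h := h2 i j hij
      rw [← Int.cast_sub, ← Int.cast_add, avoids_iff haM _ (by omega) (by omega),
        avoids_iff haM _ (by omega) (by omega)] at h
      exact h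
    refine ⟨⟨fun i => ?_, fun i j hij => ?_⟩, fun k hk => ?_, fun i j hij hi => ?_⟩
    · have := h1' i
      have := hb i
      omega
    · have := h1' i
      have := h1' j
      have := h2' i j hij
      omega
    · have := h1' k
      omega
    · have := h1' i
      have := h1' j
      have := h2' i j hij
      omega
  · rintro ⟨⟨h0, h1⟩, h2, h3⟩
    refine ⟨fun i => (h0 i).2, fun i => ?_, fun i j hij => ?_⟩
    · have := h0 i
      have := h2 i
      rw [avoids_iff haM _ (by omega) (by omega)]
      omega
    · have := h0 i
      have := h2 i
      have := h0 j
      have := h2 j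
      have := h1 i j hij
      have := h3 i j hij
      rw [← Int.cast_sub, ← Int.cast_add, avoids_iff haM _ (by omega) (by omega),
        avoids_iff haM _ (by omega) (by omega)]
      omega

lemma N_C_eq {n M a : ℕ} (hn : 2 ≤ n) (haM : a ≤ M) :
    N_C n (2 * M + 1) 0 (a : ℤ) =
      cnt n a M (fun x => Apos ((a : ℤ) / 2) x ∧
        ∀ k, x k < 0 → ((a : ℤ) - (a : ℤ) / 2) - M ≤ x k) := by
  unfold N_C
  rw [transfer]
  unfold cnt
  congr 1
  ext y
  simp only [Set.mem_ofPred_eq]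
  unfold Gd Apos PairOK
  have e2 : ∀ i, (2 * ((y i : ℤ) : ZMod (2 * M + 1))) = ((2 * y i : ℤ) : ZMod (2 * M + 1)) := by
    intro i; push_cast; rfl
  constructor
  · rintro ⟨hb, h1, h2⟩
    have h1' : ∀ i, (2 * y i < 0 ∨ a < 2 * y i) ∧ a < 2 * y i + (2 * M + 1) := fun i => by
      have := hb i
      have h := h1 i
      rw [e2 i, avoids_iff haM _ (by omega) (by omega)] at h
      exact h
    have h2' : ∀ i j, i < j → ((y i - y j < 0 ∨ a < y i - y j) ∧ a < y i - y j + (2 * M + 1)) ∧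
        ((y i + y j < 0 ∨ a < y i + y j) ∧ a < y i + y j + (2 * M + 1)) := fun i j hij => by
      have := hb i
      have := hb j
      have h := h2 i j hij
      rw [← Int.cast_sub, ← Int.cast_add, avoids_iff haM _ (by omega) (by omega),
        avoids_iff haM _ (by omega) (by omega)] at h
      exact h
    refine ⟨⟨fun i => ?_, fun i j hij => ?_⟩, fun k hk => ?_, fun k hk => ?_⟩
    · have := h1' i
      have := hb i
      omega
    · have := h1' i
      have := h1' j
      have := h2' i j hij
      omega
    · have := h1' k
      omega
    · have := h1' k
      omega
  · rintro ⟨⟨h0, h1⟩, h2, h3⟩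
    refine ⟨fun i => (h0 i).2, fun i => ?_, fun i j hij => ?_⟩
    · have := h0 i
      have := h2 i
      have := h3 i
      rw [e2 i, avoids_iff haM _ (by omega) (by omega)]
      omega
    · have := h0 i
      have := h2 i
      have := h3 i
      have := h0 j
      have := h2 j
      have := h3 j
      have := h1 i j hij
      rw [← Int.cast_sub, ← Int.cast_add, avoids_iff haM _ (by omega) (by omega),
        avoids_iff haM _ (by omega) (by omega)]
      omega

end BCproof

/-- Proposition 4.3. For all large odd `q`, the number of points
avoiding the `B_n` deformation equals the number avoiding the `C_n` deformation. -/
theorem statement7 (n a : ℕ) (hn : 2 ≤ n) (ha : 1 ≤ a) :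
    ∃ N : ℕ, ∀ q : ℕ, Odd q → N < q →
      N_B n q 0 (a : ℤ) = N_C n q 0 (a : ℤ) := by
  refine ⟨2 * a + 1, fun q hq hN => ?_⟩
  obtain ⟨M, rfl⟩ := hq
  have haM : a ≤ M := by omega
  rw [N_B_eq hn haM, N_C_eq hn haM]
  exact main_count hn (by omega) (by omega) (by omega) (by omega) (by omega)
end
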